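/- Let q be a power of 2. Then every irreducible complex character χ of SL_3(F_q) of even degree whose character field ℚ(χ) is not contained in ℝ has degree χ(1) = q(q²+q+1) and unitary discriminant (−1)^q·(q+1). -/

import Mathlib

open Matrix

noncomputable section

namespace Paper

/-- The character of a matrix representation. -/
def charOf {G : Type} [Group G] {n : ℕ} (ρ : G →* GL (Fin n) ℂ) : G → ℂ :=
  fun g => Matrix.trace ((ρ g : Matrix (Fin n) (Fin n) ℂ))

/-- Irreducibility of a complex matrix representation. -/
def IsIrredRep {G : Type} [Group G] {n : ℕ} (ρ : G →* GL (Fin n) ℂ) : Prop :=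
  0 < n ∧ ∀ W : Submodule ℂ (Fin n → ℂ),
    (∀ (g : G), ∀ v ∈ W, (ρ g : Matrix (Fin n) (Fin n) ℂ).mulVec v ∈ W) → W = ⊥ ∨ W = ⊤

/-- `χ` is an irreducible complex character of `G`. -/
def IsIrrChar {G : Type} [Group G] (χ : G → ℂ) : Prop :=
  ∃ (n : ℕ) (ρ : G →* GL (Fin n) ℂ), IsIrredRep ρ ∧ χ = charOf ρ

/-- The character field `ℚ(χ)`, as a subfield of `ℂ`. -/
def charField {G : Type} [Group G] (χ : G → ℂ) : Subfield ℂ :=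
  Subfield.closure (Set.range χ)

/-- The subfield of real numbers inside `ℂ`. -/
def realsIn : Subfield ℂ := Subfield.closure (Set.range ((↑) : ℝ → ℂ))

/-- The character field of `χ` is not contained in `ℝ`. -/
def NotReal {G : Type} [Group G] (χ : G → ℂ) : Prop := ¬ charField χ ≤ realsIn

/-- `χ` has unitary discriminant `d`. -/
def HasUnitaryDisc {G : Type} [Group G] (χ : G → ℂ) (d : ℂ) : Prop :=
  ∀ (n : ℕ) (ρ : G →* GL (Fin n) ℂ),
    χ = charOf ρ →
    (∀ g i j, ((ρ g : Matrix (Fin n) (Fin n) ℂ)) i j ∈ charField χ) →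
    ∀ H : Matrix (Fin n) (Fin n) ℂ,
      (∀ i j, H i j ∈ charField χ) →
      IsUnit H.det →
      H.conjTranspose = H →
      (∀ g, ((ρ g : Matrix (Fin n) (Fin n) ℂ)).conjTranspose * H *
        (ρ g : Matrix (Fin n) (Fin n) ℂ) = H) →
      ∃ z ∈ charField χ, z ≠ 0 ∧
        (-1 : ℂ) ^ (n * (n - 1) / 2) * H.det = d * (z * (starRingEnd ℂ) z)

/-- `χ` has orthogonal discriminant `d`. -/
def HasOrthDisc {G : Type} [Group G] (χ : G → ℂ) (d : ℂ) : Prop :=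
  ∀ (n : ℕ) (ρ : G →* GL (Fin n) ℂ),
    χ = charOf ρ →
    (∀ g i j, ((ρ g : Matrix (Fin n) (Fin n) ℂ)) i j ∈ charField χ) →
    ∀ H : Matrix (Fin n) (Fin n) ℂ,
      (∀ i j, H i j ∈ charField χ) →
      IsUnit H.det →
      H.transpose = H →
      (∀ g, ((ρ g : Matrix (Fin n) (Fin n) ℂ)).transpose * H *
        (ρ g : Matrix (Fin n) (Fin n) ℂ) = H) →
      ∃ z ∈ charField χ, z ≠ 0 ∧
        (-1 : ℂ) ^ (n * (n - 1) / 2) * H.det = d * z ^ 2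

/-- `χ` is a rational character. -/
def IsRationalChar {G : Type} [Group G] (χ : G → ℂ) : Prop :=
  ∀ g, ∃ r : ℚ, χ g = (r : ℂ)

/-- `χ` is the character of a representation over `ℚ`. -/
def RealizableOverQ {G : Type} [Group G] (χ : G → ℂ) : Prop :=
  ∃ (n : ℕ) (ρ : G →* GL (Fin n) ℂ), χ = charOf ρ ∧
    ∀ g i j, ∃ r : ℚ, ((ρ g : Matrix (Fin n) (Fin n) ℂ)) i j = (r : ℂ)

end Paper

namespace Paper

/-!
Write `V` for the space of `χ` and `U` for the group of upper unitriangular matrices, of odd index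
in `GL₃(F_q)`. If `S` is an odd-dimensional subspace of an irreducible representation which is
stable under `U` and orthogonal to its other translates, then the dimension of the representation is
the odd number `dim S * [G : Stab S]`. Together with multiplicity one for Whittaker vectors this
excludes cuspidal representations, and representations with a highest weight vector of regular
weight: after passing to a constituent over `GL₃(F_q)` lying above `χ` and applying a Hecke
operator, an even degree forces a highest weight vector `w` on which the torus acts through a
character `ν⁻¹` of the first entry, and, if `ν ≠ 1`, that `w` is an eigenvector with eigenvalue `-1`
of the Hecke operator `T` of the Levi subgroup `GL₂`. If `ν = 1`, the Bruhat decomposition makes a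
diagonal matrix coefficient real-valued, and then so is `χ`.

So `ν ≠ 1`, and `w` is orthogonal to `g w` unless `g` lies in the parabolic subgroup `P` of index
`q² + q + 1`. The relation `T w = -w` determines the inner products of the `q` vectors `x t * s`
applied to `w`, where `x` is the simple root subgroup of the Levi subgroup: their Gram matrix is `κ`
times the matrix with `q` on the diagonal and `-1` elsewhere, of determinant
`κ ^ q * (q + 1) ^ (q - 1)` with `κ` real. Their translates by the cosets of `P` form a basis of
`V`, which gives the degree. As `q` is even and `q² + q + 1` is odd, the determinant of the form in
this basis is `q + 1` up to the square of a real number. Finally `w` is determined up to a scalar by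
its stabilizer, hence may be chosen with entries in `ℚ(χ)`.
-/

section Irreducible

variable {G V : Type*} [Group G] [AddCommGroup V] [Module ℂ V] {ρ : Representation ℂ G V}

theorem eq_bot_or_eq_top_of_forall_apply_mem [ρ.IsIrreducible] {S : Submodule ℂ V}
    (hS : ∀ g, ∀ v ∈ S, ρ g v ∈ S) : S = ⊥ ∨ S = ⊤ := by
  let σ : Subrepresentation ρ := ⟨S, fun g v hv ↦ hS g v hv⟩
  exact (eq_bot_or_eq_top σ).imp (congrArg Subrepresentation.toSubmodule)
    (congrArg Subrepresentation.toSubmodule)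

theorem isIrreducible_of_forall_apply_mem [Nontrivial V]
    (h : ∀ S : Submodule ℂ V, (∀ g, ∀ v ∈ S, ρ g v ∈ S) → S = ⊥ ∨ S = ⊤) : ρ.IsIrreducible :=
  { exists_pair_ne := ⟨⊥, ⊤, fun e ↦ bot_ne_top (congrArg Subrepresentation.toSubmodule e)⟩
    eq_bot_or_eq_top := fun σ ↦ (h σ.toSubmodule fun g _ hv ↦ σ.apply_mem_toSubmodule g hv).imp
      (fun e ↦ Subrepresentation.toSubmodule_injective e)
      (fun e ↦ Subrepresentation.toSubmodule_injective e) }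

theorem nontrivial_of_isIrreducible (ρ : Representation ℂ G V) [ρ.IsIrreducible] :
    Nontrivial V := by
  obtain ⟨σ, τ, hne⟩ := exists_pair_ne (Subrepresentation ρ)
  by_contra hV
  have := not_nontrivial_iff_subsingleton.1 hV
  exact hne (Subrepresentation.toSubmodule_injective (Subsingleton.elim _ _))

theorem isIrreducible_comp_of_surjective [ρ.IsIrreducible] {G' : Type*} [Group G'] {φ : G' →* G}
    (hφ : Function.Surjective φ) : Representation.IsIrreducible (ρ.comp φ) := by
  have := nontrivial_of_isIrreducible ρ
  refine isIrreducible_of_forall_apply_mem fun S hS ↦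
    eq_bot_or_eq_top_of_forall_apply_mem (ρ := ρ) fun g v hv ↦ ?_
  obtain ⟨g, rfl⟩ := hφ g
  exact hS g v hv

theorem apply_mem_iSup_map {S : Submodule ℂ V} (g : G) {v : V} (hv : v ∈ ⨆ g, S.map (ρ g)) :
    ρ g v ∈ ⨆ g, S.map (ρ g) := by
  suffices ⨆ g, S.map (ρ g) ≤ (⨆ g, S.map (ρ g)).comap (ρ g) from this hv
  refine iSup_le fun x ↦ Submodule.map_le_iff_le_comap.1 ?_
  rw [← Submodule.map_comp, ← Module.End.mul_eq_comp, ← map_mul]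
  exact le_iSup (fun g ↦ S.map (ρ g)) (g * x)

theorem iSup_map_eq_top [ρ.IsIrreducible] {S : Submodule ℂ V} (hS : S ≠ ⊥) :
    ⨆ g, S.map (ρ g) = ⊤ :=
  (eq_bot_or_eq_top_of_forall_apply_mem (ρ := ρ) fun g _ ↦
    apply_mem_iSup_map g).resolve_left fun h ↦ hS <| by
      simpa [Module.End.one_eq_id] using iSup_eq_bot.1 h 1

theorem span_range_apply_eq_top [ρ.IsIrreducible] {w : V} (hw : w ≠ 0) :
    Submodule.span ℂ (Set.range fun g ↦ ρ g w) = ⊤ := by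
  rw [← iSup_map_eq_top (ρ := ρ) (mt Submodule.span_singleton_eq_bot.1 hw),
    Submodule.span_range_eq_iSup]
  simp only [Submodule.map_span, Set.image_singleton]

variable [FiniteDimensional ℂ V]

theorem exists_eq_smul_of_commute [ρ.IsIrreducible] {f : Module.End ℂ V}
    (hf : ∀ g v, f (ρ g v) = ρ g (f v)) : ∃ c : ℂ, ∀ v, f v = c • v := by
  obtain ⟨c, hc⟩ :=
    (Representation.IsIrreducible.algebraMap_intertwiningMap_bijective_of_isAlgClosed
      (ρ := ρ)).2 ⟨f, fun g ↦ LinearMap.ext (hf g)⟩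
  exact ⟨c, fun v ↦ (congrArg (fun φ : ρ.IntertwiningMap ρ ↦ φ v) hc).symm⟩

theorem exists_isIrreducible_subrepresentation [Nontrivial V] (ρ : Representation ℂ G V) :
    ∃ σ : Subrepresentation ρ, σ.toRepresentation.IsIrreducible := by
  have : WellFoundedLT (Subrepresentation ρ) :=
    ⟨(InvImage.wf Subrepresentation.toSubmodule wellFounded_lt).mono fun _ _ h ↦ h⟩
  have htop : (⊤ : Subrepresentation ρ) ≠ ⊥ :=
    fun h ↦ top_ne_bot (congrArg Subrepresentation.toSubmodule h)
  obtain ⟨σ, hσ, -⟩ := (eq_bot_or_exists_atom_le (⊤ : Subrepresentation ρ)).resolve_left htop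
  have hne : σ.toSubmodule ≠ ⊥ := fun h ↦ hσ.1 (Subrepresentation.toSubmodule_injective h)
  have := Submodule.nontrivial_iff_ne_bot.2 hne
  refine ⟨σ, isIrreducible_of_forall_apply_mem fun S hS ↦ ?_⟩
  let τ : Subrepresentation ρ := ⟨S.map σ.toSubmodule.subtype, by
    rintro g _ ⟨v, hv, rfl⟩
    exact ⟨_, hS g v hv, rfl⟩⟩
  have hτ : τ ≤ σ := Submodule.map_subtype_le σ.toSubmodule S
  have hinj := Submodule.map_injective_of_injective σ.toSubmodule.injective_subtype
  refine (hσ.le_iff.1 hτ).imp (fun h ↦ hinj ?_) fun h ↦ hinj ?_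
  · rw [Submodule.map_bot]
    exact congrArg Subrepresentation.toSubmodule h
  · rw [Submodule.map_subtype_top]
    exact congrArg Subrepresentation.toSubmodule h

end Irreducible

section Weights

variable {A V : Type*} [CommGroup A] [AddCommGroup V] [Module ℂ V] [FiniteDimensional ℂ V]

theorem exists_weight_vector (σ : Representation ℂ A V) {S : Submodule ℂ V} (hS : S ≠ ⊥)
    (hσ : ∀ a, ∀ v ∈ S, σ a v ∈ S) :
    ∃ w ∈ S, w ≠ 0 ∧ ∃ l : A →* ℂˣ, ∀ a, σ a w = (l a : ℂ) • w := by
  let τ : Subrepresentation σ := ⟨S, fun a v hv ↦ hσ a v hv⟩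
  have : Nontrivial τ.toSubmodule := Submodule.nontrivial_iff_ne_bot.2 hS
  obtain ⟨κ, hκ⟩ := exists_isIrreducible_subrepresentation τ.toRepresentation
  obtain ⟨⟨⟨w, hwS⟩, hwκ⟩, hw0, hspan⟩ := finrank_eq_one_iff'.1
    (Representation.IsIrreducible.finrank_eq_one_of_isMulCommutative κ.toRepresentation)
  have hw : w ≠ 0 := fun h ↦ hw0 (by simp [h])
  choose l hl using fun a ↦ hspan (κ.toRepresentation a ⟨⟨w, hwS⟩, hwκ⟩)
  replace hl : ∀ a, σ a w = l a • w :=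
    fun a ↦ (congrArg (fun v : κ.toSubmodule ↦ ((v : τ.toSubmodule) : V)) (hl a)).symm
  let L : A →* ℂ :=
    { toFun := l
      map_one' := smul_left_injective ℂ hw (by simp [← hl])
      map_mul' := fun a b ↦ smul_left_injective ℂ hw <| by
        change l (a * b) • w = (l a * l b) • w
        rw [← hl, map_mul, Module.End.mul_apply, hl b, map_smul, hl a, smul_smul, mul_comm] }
  exact ⟨w, hwS, hw, L.toHomUnits, hl⟩

end Weights

section Invariant

variable {G V : Type*} [Group G] [AddCommGroup V] [Module ℂ V]

/-- An invariant Hermitian form of a complex representation; it may be degenerate, so that it also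
covers the Hermitian matrices of a unitary discriminant. -/
structure IsInvariantForm (ρ : Representation ℂ G V) (h : V →ₗ⋆[ℂ] V →ₗ[ℂ] ℂ) : Prop where
  isSymm : h.IsSymm
  apply_apply : ∀ g v w, h (ρ g v) (ρ g w) = h v w

/-- An invariant Hermitian form without isotropic vectors, the sesquilinear version of an invariant
inner product. -/
structure IsInvariantInner (ρ : Representation ℂ G V) (h : V →ₗ⋆[ℂ] V →ₗ[ℂ] ℂ) : Prop extends
    IsInvariantForm ρ h where
  eq_zero_of_apply_self : ∀ v, h v v = 0 → v = 0

variable {ρ : Representation ℂ G V} {h : V →ₗ⋆[ℂ] V →ₗ[ℂ] ℂ}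

theorem IsInvariantForm.conj_apply (hh : IsInvariantForm ρ h) (v w : V) :
    starRingEnd ℂ (h v w) = h w v :=
  hh.isSymm.eq v w

theorem IsInvariantForm.apply_left (hh : IsInvariantForm ρ h) (g : G) (v w : V) :
    h (ρ g v) w = h v (ρ g⁻¹ w) := by
  rw [← hh.apply_apply g v, ρ.self_inv_apply]

theorem IsInvariantForm.apply_right_of_eq_self (hh : IsInvariantForm ρ h) {g : G} {v : V}
    (hv : ρ g v = v) (w : V) : h v (ρ g w) = h v w := by
  rw [← hh.apply_apply g v w, hv]

theorem IsInvariantForm.comp (hh : IsInvariantForm ρ h) {G' : Type*} [Group G'] (φ : G' →* G) :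
    IsInvariantForm (ρ.comp φ) h :=
  ⟨hh.isSymm, fun g ↦ hh.apply_apply (φ g)⟩

theorem IsInvariantInner.comp (hh : IsInvariantInner ρ h) {G' : Type*} [Group G'] (φ : G' →* G) :
    IsInvariantInner (ρ.comp φ) h :=
  ⟨hh.toIsInvariantForm.comp φ, hh.eq_zero_of_apply_self⟩

theorem exists_isInvariantInner [Finite G] [FiniteDimensional ℂ V] (ρ : Representation ℂ G V) :
    ∃ h, IsInvariantInner ρ h := by
  have := Fintype.ofFinite G
  let b := Module.finBasis ℂ V
  let h : V →ₗ⋆[ℂ] V →ₗ[ℂ] ℂ := LinearMap.mk₂'ₛₗ (starRingEnd ℂ) (RingHom.id ℂ)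
    (fun v w ↦ ∑ g, ∑ i, starRingEnd ℂ (b.repr (ρ g v) i) * b.repr (ρ g w) i)
    (fun v v' w ↦ by simp [add_mul, Finset.sum_add_distrib])
    (fun c v w ↦ by simp [mul_assoc, Finset.mul_sum])
    (fun v w w' ↦ by simp [mul_add, Finset.sum_add_distrib])
    (fun c v w ↦ by simp [mul_left_comm, Finset.mul_sum])
  refine ⟨h, ⟨⟨⟨fun v w ↦ ?_⟩, fun x v w ↦ ?_⟩, fun v hv ↦ ?_⟩⟩
  · simp [h, mul_comm]
  · refine Fintype.sum_equiv (Equiv.mulRight x) _ _ fun g ↦ ?_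
    simp [Module.End.mul_apply]
  · have hre : ∑ g, ∑ i, Complex.normSq (b.repr (ρ g v) i) = 0 := by
      have : ((∑ g, ∑ i, Complex.normSq (b.repr (ρ g v) i) : ℝ) : ℂ) = h v v := by
        simp [h, Complex.normSq_eq_conj_mul_self]
      exact_mod_cast this.trans hv
    rw [Finset.sum_eq_zero_iff_of_nonneg
      fun g _ ↦ Finset.sum_nonneg fun i _ ↦ Complex.normSq_nonneg _] at hre
    have h1 := hre 1 (Finset.mem_univ _)
    rw [Finset.sum_eq_zero_iff_of_nonneg fun i _ ↦ Complex.normSq_nonneg _] at h1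
    refine b.ext_elem fun i ↦ ?_
    simpa using h1 i (Finset.mem_univ _)

end Invariant

section Orthogonality

variable {G V : Type*} [Group G] [Finite G] [AddCommGroup V] [Module ℂ V]
  {ρ : Representation ℂ G V} {h : V →ₗ⋆[ℂ] V →ₗ[ℂ] ℂ}

theorem norm_eq_one_of_apply_eq_smul {g : G} {v : V} (hv : v ≠ 0) {c : ℂ}
    (hc : ρ g v = c • v) : ‖c‖ = 1 := by
  have hpow : ∀ n : ℕ, ρ (g ^ n) v = c ^ n • v := fun n ↦ by
    induction n with
    | zero => simp
    | succ n ih => rw [pow_succ, map_mul, Module.End.mul_apply, hc, map_smul, ih, smul_smul,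
        pow_succ']
  refine Complex.norm_eq_one_of_pow_eq_one (n := orderOf g) ?_ (orderOf_pos g).ne'
  apply smul_left_injective ℂ hv
  simp [← hpow, pow_orderOf_eq_one]

theorem IsInvariantForm.apply_right_of_eq_smul (hh : IsInvariantForm ρ h) {g : G} {v : V} {c : ℂ}
    (hv : ρ g v = c • v) (w : V) : h v (ρ g w) = c * h v w := by
  obtain rfl | hv0 := eq_or_ne v 0
  · simp
  have hc : c * starRingEnd ℂ c = 1 := by
    rw [Complex.mul_conj, Complex.normSq_eq_norm_sq, norm_eq_one_of_apply_eq_smul hv0 hv]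
    norm_num
  rw [← hh.apply_apply g v w, hv, map_smulₛₗ, LinearMap.smul_apply, smul_eq_mul, ← mul_assoc, hc,
    one_mul]

theorem IsInvariantForm.apply_eq_zero_of_ne (hh : IsInvariantForm ρ h) {g : G} {v w : V} {c d : ℂ}
    (hv : ρ g v = c • v) (hw : ρ g w = d • w) (hcd : c ≠ d) : h v w = 0 := by
  have key := hh.apply_right_of_eq_smul hv w
  rw [hw, map_smul, smul_eq_mul] at key
  exact (mul_eq_mul_right_iff.1 key).resolve_left hcd.symm

end Orthogonality

section WeightSpace

variable {A V : Type*} [Group A] [AddCommGroup V] [Module ℂ V]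

/-- The subspace on which a group acts through the linear character `χ`. -/
def weightSpace (σ : Representation ℂ A V) (χ : A →* ℂˣ) : Submodule ℂ V where
  carrier := {v | ∀ a, σ a v = (χ a : ℂ) • v}
  add_mem' hv hw a := by rw [map_add, hv, hw, smul_add]
  zero_mem' a := by simp
  smul_mem' c v hv a := by rw [map_smul, hv, smul_comm]

/-- The projection onto `weightSpace σ χ` that averages over the group. -/
def weightProj [Fintype A] (σ : Representation ℂ A V) (χ : A →* ℂˣ) : Module.End ℂ V :=
  (Fintype.card A : ℂ)⁻¹ • ∑ a, (χ a⁻¹ : ℂ) • σ a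

variable [Fintype A] {σ : Representation ℂ A V} {χ : A →* ℂˣ}

theorem weightProj_apply (v : V) :
    weightProj σ χ v = (Fintype.card A : ℂ)⁻¹ • ∑ a, (χ a⁻¹ : ℂ) • σ a v := by
  simp [weightProj]

theorem weightProj_mem (v : V) : weightProj σ χ v ∈ weightSpace σ χ := fun b ↦ by
  rw [weightProj_apply, map_smul, smul_comm, map_sum]
  congr 1
  rw [Finset.smul_sum]
  exact Fintype.sum_equiv (Equiv.mulLeft b) _ _ fun a ↦ by
    simp [smul_smul, mul_comm (χ a : ℂ)⁻¹]

theorem weightProj_eq_self {v : V} (hv : v ∈ weightSpace σ χ) : weightProj σ χ v = v := by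
  have hterm : ∀ a, (χ a⁻¹ : ℂ) • σ a v = v := fun a ↦ by simp [hv a, smul_smul]
  rw [weightProj_apply, Finset.sum_congr rfl fun a _ ↦ hterm a]
  simp [← Nat.cast_smul_eq_nsmul ℂ, smul_smul]

variable {h : V →ₗ⋆[ℂ] V →ₗ[ℂ] ℂ}

theorem IsInvariantForm.apply_weightProj (hh : IsInvariantForm σ h) {v : V}
    (hv : v ∈ weightSpace σ χ) (w : V) : h v (weightProj σ χ w) = h v w := by
  have hterm : ∀ a, (χ a⁻¹ : ℂ) * h v (σ a w) = h v w := fun a ↦ by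
    simp [hh.apply_right_of_eq_smul (hv a) w]
  rw [weightProj_apply, map_smul, map_sum]
  simp only [map_smul, smul_eq_mul, hterm]
  simp

theorem IsInvariantForm.weightProj_apply_left (hh : IsInvariantForm σ h) (v w : V) :
    h (weightProj σ χ v) w = h v (weightProj σ χ w) := by
  rw [← hh.apply_weightProj (weightProj_mem v), ← hh.conj_apply,
    hh.apply_weightProj (weightProj_mem w), hh.conj_apply]

end WeightSpace

section Imprimitivity

variable {G V : Type*} [Group G] [Finite G] [AddCommGroup V] [Module ℂ V] [FiniteDimensional ℂ V]
  {ρ : Representation ℂ G V} {h : V →ₗ⋆[ℂ] V →ₗ[ℂ] ℂ}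

/-- The subgroup of the elements mapping a subspace into itself. -/
def submoduleStabilizer (ρ : Representation ℂ G V) (S : Submodule ℂ V) : Subgroup G where
  carrier := {g | ∀ v ∈ S, ρ g v ∈ S}
  mul_mem' ha hb v hv := by rw [map_mul]; exact ha _ (hb v hv)
  one_mem' v hv := by simpa using hv
  inv_mem' {g} hg := by
    have hpow : ∀ n : ℕ, ∀ v ∈ S, ρ (g ^ n) v ∈ S := fun n ↦ by
      induction n with
      | zero => simp
      | succ n ih => exact fun v hv ↦ by rw [pow_succ, map_mul]; exact ih _ (hg v hv)
    obtain ⟨n, hn⟩ := mem_powers_iff_mem_zpowers.2 (Subgroup.inv_mem _ (Subgroup.mem_zpowers g))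
    exact hn ▸ hpow n

theorem finrank_iSup_map_eq_index_mul (hh : IsInvariantInner ρ h) {S : Submodule ℂ V}
    (hS : ∀ g, g ∉ submoduleStabilizer ρ S → ∀ v ∈ S, ∀ w ∈ S, h v (ρ g w) = 0) :
    Module.finrank ℂ ↥(⨆ g, S.map (ρ g)) =
      (submoduleStabilizer ρ S).index * Module.finrank ℂ S := by
  classical
  set K := submoduleStabilizer ρ S
  have := Fintype.ofFinite (G ⧸ K)
  let f : (G ⧸ K → S) →ₗ[ℂ] V :=
    ∑ c, (ρ c.out).comp (S.subtype.comp (LinearMap.proj (φ := fun _ ↦ S) c))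
  have hf : ∀ x, f x = ∑ c, ρ c.out (x c) := fun x ↦ by simp [f]
  have hinj : Function.Injective f := by
    refine (injective_iff_map_eq_zero f).2 fun x hx ↦ funext fun c ↦ ?_
    have hzero : ∀ c' ≠ c, h (x c) (ρ (c.out⁻¹ * c'.out) (x c')) = 0 := fun c' hc' ↦
      hS _ (fun hmem ↦ hc' <| by
        rw [← c.out_eq', ← c'.out_eq']
        exact (QuotientGroup.eq.2 hmem).symm) _ (x c).2 _ (x c').2
    have hsum : h (ρ c.out (x c)) (f x) = h (x c) (x c) := by
      simp_rw [hf, map_sum, hh.apply_left, ← Module.End.mul_apply, ← map_mul]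
      rw [Finset.sum_eq_single c (fun c' _ ↦ hzero c') (by simp)]
      simp
    rw [hx, map_zero] at hsum
    exact Subtype.ext (hh.eq_zero_of_apply_self _ hsum.symm)
  have hrange : LinearMap.range f = ⨆ g, S.map (ρ g) := by
    refine le_antisymm ?_ (iSup_le fun g ↦ ?_)
    · rintro _ ⟨x, rfl⟩
      rw [hf]
      exact Submodule.sum_mem _ fun c _ ↦ Submodule.mem_iSup_of_mem c.out ⟨x c, (x c).2, rfl⟩
    · rintro _ ⟨v, hv, rfl⟩
      have hk : (g : G ⧸ K).out⁻¹ * g ∈ K := QuotientGroup.eq.1 (g : G ⧸ K).out_eq'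
      refine ⟨Pi.single (g : G ⧸ K) ⟨_, hk v hv⟩, ?_⟩
      rw [hf, Finset.sum_eq_single (g : G ⧸ K) (fun c _ hc ↦ by simp [Pi.single_eq_of_ne hc])
        (by simp), Pi.single_eq_same, ← Module.End.mul_apply, ← map_mul, mul_inv_cancel_left]
  rw [← hrange, LinearMap.finrank_range_of_inj hinj, Module.finrank_pi_fintype, Finset.sum_const,
    Finset.card_univ, smul_eq_mul, ← Nat.card_eq_fintype_card, Subgroup.index]

theorem odd_finrank_iSup_map (hh : IsInvariantInner ρ h) {S : Submodule ℂ V}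
    (hodd : Odd (Module.finrank ℂ S)) {U : Subgroup G} (hU : Odd U.index)
    (hUS : U ≤ submoduleStabilizer ρ S)
    (hS : ∀ g, g ∉ submoduleStabilizer ρ S → ∀ v ∈ S, ∀ w ∈ S, h v (ρ g w) = 0) :
    Odd (Module.finrank ℂ ↥(⨆ g, S.map (ρ g))) := by
  rw [finrank_iSup_map_eq_index_mul hh hS]
  exact (hU.of_dvd_nat (Subgroup.index_dvd_of_le hUS)).mul hodd

end Imprimitivity

section Gelfand

variable {G A V : Type*} [Group G] [Group A] [AddCommGroup V] [Module ℂ V]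
  {ρ : Representation ℂ G V} {h : V →ₗ⋆[ℂ] V →ₗ[ℂ] ℂ} {φ : A →* G} {χ : A →* ℂˣ}

local notation "E" => weightSpace (ρ.comp φ) χ
local notation "e" => weightProj (ρ.comp φ) χ

theorem weightSpace_le_of_forall_weightProj_mem [Fintype A] [ρ.IsIrreducible] {v : V} (hv : v ≠ 0)
    {T : Submodule ℂ V} (hT : ∀ g, e (ρ g v) ∈ T) : E ≤ T := fun w hw ↦ by
  have htop : T.comap e = ⊤ := top_le_iff.1 <| by
    rw [← span_range_apply_eq_top (ρ := ρ) hv, Submodule.span_le]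
    rintro _ ⟨g, rfl⟩
    exact hT g
  have hmem : w ∈ T.comap e := htop ▸ Submodule.mem_top
  rwa [Submodule.mem_comap, weightProj_eq_self hw] at hmem

-- If the operators `e ρ(g)` commute on `E`, an eigenspace of one of them on `E` is all of `E`.
theorem finrank_weightSpace_le_one_of_commute [Fintype A] [FiniteDimensional ℂ V]
    [ρ.IsIrreducible]
    (hcomm : ∀ v ∈ E, ∀ g g', e (ρ g (e (ρ g' v))) = e (ρ g' (e (ρ g v)))) :
    Module.finrank ℂ E ≤ 1 := by
  obtain hE | hE := eq_or_ne E ⊥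
  · rw [hE, finrank_bot]
    exact zero_le_one
  have := Submodule.nontrivial_iff_ne_bot.2 hE
  have hscalar : ∀ g, ∃ c : ℂ, ∀ v ∈ E, e (ρ g v) = c • v := fun g ↦ by
    let f : Module.End ℂ E := (e * ρ g).restrict fun v _ ↦ weightProj_mem _
    obtain ⟨c, hc⟩ := Module.End.exists_eigenvalue f
    obtain ⟨v, hv⟩ := hc.exists_hasEigenvector
    have hfv : e (ρ g v) = c • (v : V) := congrArg Subtype.val hv.apply_eq_smul
    have hle : E ≤ Module.End.eigenspace (e * ρ g) c :=
      weightSpace_le_of_forall_weightProj_mem (fun h0 ↦ hv.2 (Subtype.ext h0)) fun g' ↦ by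
        rw [Module.End.mem_eigenspace_iff, Module.End.mul_apply, hcomm v v.2, hfv, map_smul,
          map_smul]
    exact ⟨c, fun w hw ↦ Module.End.mem_eigenspace_iff.1 (hle hw)⟩
  obtain ⟨v, hv, hv0⟩ := Submodule.exists_mem_ne_zero_of_ne_bot hE
  have hle : E ≤ Submodule.span ℂ {v} := weightSpace_le_of_forall_weightProj_mem hv0 fun g ↦ by
    obtain ⟨c, hc⟩ := hscalar g
    exact hc v hv ▸ Submodule.smul_mem _ c (Submodule.mem_span_singleton_self v)
  exact (Submodule.finrank_mono hle).trans (finrank_span_singleton hv0).le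

-- Gelfand's trick: `τ` is an anti-involution in the applications.
theorem finrank_weightSpace_le_one [Finite A] [FiniteDimensional ℂ V] [ρ.IsIrreducible]
    (hh : IsInvariantInner ρ h) {τ : G → G} (hτ : ∀ g g', τ (g * g') = τ g' * τ g) (t : A ≃ A)
    (hφ : ∀ a, τ (φ a) = φ (t a)) (hχ : ∀ a, χ (t a) = χ a)
    (hsymm : ∀ v ∈ E, ∀ w ∈ E, ∀ g, h v (ρ (τ g) w) = h v (ρ g w)) :
    Module.finrank ℂ E ≤ 1 := by
  have := Fintype.ofFinite A
  have hA : IsInvariantForm (ρ.comp φ) h := hh.toIsInvariantForm.comp φ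
  have hreverse : ∀ v ∈ E, ∀ w ∈ E, ∀ g g',
      h v (ρ g (e (ρ g' w))) = h v (ρ (τ g') (e (ρ (τ g) w))) := fun v hv w hw g g' ↦ by
    have hexpand : ∀ g g', h v (ρ g (e (ρ g' w))) =
        (Fintype.card A : ℂ)⁻¹ * ∑ a, (χ a⁻¹ : ℂ) * h v (ρ (g * φ a * g') w) := fun g g' ↦ by
      simp only [weightProj_apply, map_smul, map_sum, smul_eq_mul, map_mul]
      rfl
    rw [hexpand, hexpand]
    congr 1
    refine Fintype.sum_equiv t _ _ fun a ↦ ?_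
    rw [← hsymm v hv w hw, hτ, hτ, hφ, ← mul_assoc, map_inv, map_inv, hχ]
  refine finrank_weightSpace_le_one_of_commute fun v hv g g' ↦ sub_eq_zero.1 <|
    hh.eq_zero_of_apply_self _ ?_
  set w := e (ρ g (e (ρ g' v))) - e (ρ g' (e (ρ g v)))
  have hw : w ∈ E := Submodule.sub_mem _ (weightProj_mem _) (weightProj_mem _)
  have hleft : ∀ u, h w (ρ g' (e u)) = h (e (ρ g'⁻¹ w)) u := fun u ↦ by
    rw [hA.weightProj_apply_left, hh.apply_left, inv_inv]
  rw [map_sub, hA.apply_weightProj hw, hA.apply_weightProj hw, sub_eq_zero]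
  calc h w (ρ g (e (ρ g' v))) = h w (ρ g' (e (ρ (τ g) v))) := by
        rw [hreverse w hw v hv, hsymm w hw _ (weightProj_mem _)]
    _ = h w (ρ g' (e (ρ g v))) := by
        rw [hleft, hleft, hsymm _ (weightProj_mem _) v hv]

end Gelfand

section Clifford

variable {N G V W : Type*} [Group N] [Group G] [AddCommGroup V] [Module ℂ V] [AddCommGroup W]
  [Module ℂ W] {φ : N →* G} {ρ : Representation ℂ N V} {σ : Representation ℂ G W} {e : W →ₗ[ℂ] V}

theorem exists_finrank_eq_finrank_inf_ker_add [FiniteDimensional ℂ W] (f : W →ₗ[ℂ] V)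
    (K : Submodule ℂ W) (hf : K.map f = ⊥ ∨ K.map f = ⊤) :
    ∃ c, Module.finrank ℂ K =
      Module.finrank ℂ ↥(K ⊓ LinearMap.ker f) + c * Module.finrank ℂ V := by
  have hker : Module.finrank ℂ (LinearMap.ker (f.domRestrict K)) =
      Module.finrank ℂ ↥(K ⊓ LinearMap.ker f) := by
    rw [LinearMap.ker_domRestrict, ← Submodule.finrank_map_subtype_eq, Submodule.map_comap_subtype]
  have hrange : ∃ c, Module.finrank ℂ (LinearMap.range (f.domRestrict K)) =
      c * Module.finrank ℂ V := by
    rw [LinearMap.range_domRestrict]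
    obtain h | h := hf
    · exact ⟨0, by rw [h, finrank_bot, zero_mul]⟩
    · exact ⟨1, by rw [h, finrank_top, one_mul]⟩
  obtain ⟨c, hc⟩ := hrange
  exact ⟨c, by rw [← LinearMap.finrank_range_add_finrank_ker (f.domRestrict K), hker, hc, add_comm]⟩

-- Intersecting the kernels of the maps `e ∘ σ g` one at a time, the dimension drops by `0` or
-- `dim V`, and the intersection of all of them is zero.
theorem finrank_dvd_finrank_of_equivariant [Finite G] [FiniteDimensional ℂ W]
    [ρ.IsIrreducible] [σ.IsIrreducible] (hφ : φ.range.Normal)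
    (he : ∀ n w, e (σ (φ n) w) = ρ n (e w)) (he0 : e ≠ 0) :
    Module.finrank ℂ V ∣ Module.finrank ℂ W := by
  classical
  have := Fintype.ofFinite G
  let K (s : Finset G) : Submodule ℂ W := s.inf fun g ↦ LinearMap.ker (e ∘ₗ σ g)
  have hK : ∀ {s w}, w ∈ K s ↔ ∀ g ∈ s, e (σ g w) = 0 := by simp [K, Submodule.mem_finsetInf]
  have hconj : ∀ g n w, ∃ m, σ g (σ (φ n) w) = σ (φ m) (σ g w) := fun g n w ↦ by
    obtain ⟨m, hm⟩ := hφ.conj_mem (φ n) ⟨n, rfl⟩ g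
    exact ⟨m, by simp only [hm, ← Module.End.mul_apply, ← map_mul, inv_mul_cancel_right]⟩
  have hstable : ∀ s n, ∀ w ∈ K s, σ (φ n) w ∈ K s := fun s n w hw ↦ hK.2 fun g hg ↦ by
    obtain ⟨m, hm⟩ := hconj g n w
    rw [hm, he, hK.1 hw g hg, map_zero]
  have himage : ∀ s g, (K s).map (e ∘ₗ σ g) = ⊥ ∨ (K s).map (e ∘ₗ σ g) = ⊤ := fun s g ↦ by
    refine eq_bot_or_eq_top_of_forall_apply_mem (ρ := ρ) ?_
    rintro n _ ⟨w, hw, rfl⟩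
    obtain ⟨m, hm⟩ := hconj g⁻¹ n (σ g w)
    refine ⟨σ (φ m) w, hstable s m w hw, ?_⟩
    rw [σ.inv_self_apply] at hm
    rw [LinearMap.comp_apply, ← hm, σ.self_inv_apply, he, LinearMap.comp_apply]
  have hdrop : ∀ s, ∃ c, Module.finrank ℂ W =
      Module.finrank ℂ (K s) + c * Module.finrank ℂ V := fun s ↦ by
    induction s using Finset.induction_on with
    | empty =>
      exact ⟨0, by rw [show K ∅ = ⊤ from Finset.inf_empty, finrank_top, zero_mul, add_zero]⟩
    | insert g s _ ih =>
      obtain ⟨c, hc⟩ := ih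
      obtain ⟨d, hd⟩ := exists_finrank_eq_finrank_inf_ker_add (e ∘ₗ σ g) (K s) (himage s g)
      refine ⟨d + c, ?_⟩
      rw [hc, hd, add_mul, add_assoc, inf_comm, show K (insert g s) = _ from Finset.inf_insert]
  have huniv : K Finset.univ = ⊥ := by
    refine (eq_bot_or_eq_top_of_forall_apply_mem (ρ := σ) fun g w hw ↦
      hK.2 fun _ _ ↦ ?_).resolve_right fun htop ↦ he0 (LinearMap.ext fun w ↦ ?_)
    · rw [← Module.End.mul_apply, ← map_mul]
      exact hK.1 hw _ (Finset.mem_univ _)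
    · have hw : w ∈ K Finset.univ := htop ▸ Submodule.mem_top
      simpa using hK.1 hw 1 (Finset.mem_univ _)
  obtain ⟨c, hc⟩ := hdrop Finset.univ
  exact ⟨c, by rw [hc, huniv, finrank_bot, zero_add, mul_comm]⟩

theorem exists_isIrreducible_equivariant [Finite G] [FiniteDimensional ℂ V] [Nontrivial V]
    (hφ : Function.Injective φ) (ρ : Representation ℂ N V) :
    ∃ (σ : Subrepresentation (Representation.coind φ ρ)) (e : σ.toSubmodule →ₗ[ℂ] V),
      Representation.IsIrreducible (V := σ.toSubmodule) σ.toRepresentation ∧ e ≠ 0 ∧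
        ∀ n w, e (σ.toRepresentation (φ n) w) = ρ n (e w) := by
  obtain ⟨v, hv⟩ := exists_ne (0 : V)
  let f : Representation.coindV φ ρ := ⟨Function.extend φ (fun n ↦ ρ n v) 0, fun n g ↦ by
    by_cases hg : ∃ m, φ m = g
    · obtain ⟨m, rfl⟩ := hg
      rw [← map_mul, hφ.extend_apply, hφ.extend_apply, map_mul, Module.End.mul_apply]
    · have hng : ¬∃ m, φ m = φ n * g := by
        rintro ⟨m, hm⟩
        exact hg ⟨n⁻¹ * m, by rw [map_mul, hm, map_inv, inv_mul_cancel_left]⟩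
      rw [Function.extend_apply' _ _ _ hg, Function.extend_apply' _ _ _ hng]
      simp⟩
  have hf : f ≠ 0 := fun h0 ↦ hv <| by
    have h1 : Function.extend φ (fun n ↦ ρ n v) 0 (φ 1) = 0 :=
      congrFun (congrArg Subtype.val h0) (φ 1)
    rwa [hφ.extend_apply, map_one] at h1
  have : Nontrivial (Representation.coindV φ ρ) := ⟨f, 0, hf⟩
  obtain ⟨σ, hσ⟩ := exists_isIrreducible_subrepresentation (Representation.coind φ ρ)
  let e : σ.toSubmodule →ₗ[ℂ] V :=
    LinearMap.proj (φ := fun _ ↦ V) 1 ∘ₗ (Representation.coindV φ ρ).subtype ∘ₗ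
      σ.toSubmodule.subtype
  have he : ∀ g w, e (σ.toRepresentation g w) = (w : Representation.coindV φ ρ).1 g := fun g w ↦
    congrArg w.1.1 (one_mul g)
  refine ⟨σ, e, hσ, fun h0 ↦ ?_, fun n w ↦ ?_⟩
  · have := nontrivial_of_isIrreducible (V := σ.toSubmodule) σ.toRepresentation
    obtain ⟨w, hw⟩ := exists_ne (0 : σ.toSubmodule)
    exact hw (Subtype.ext (Subtype.ext (funext fun g ↦ by rw [← he, h0]; rfl)))
  · rw [he, ← mul_one (φ n), (w : Representation.coindV φ ρ).2 n 1]
    rfl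

end Clifford

section Character

variable {G V : Type*} [Group G] [Finite G] [AddCommGroup V] [Module ℂ V]
  [FiniteDimensional ℂ V] {ρ : Representation ℂ G V} {h : V →ₗ⋆[ℂ] V →ₗ[ℂ] ℂ}

-- `∑ x, ρ (x g x⁻¹)` is a scalar, which can be read off from its matrix coefficient at `w`.
theorem conj_character_eq_self_of_apply_self_ne_zero [ρ.IsIrreducible] (hh : IsInvariantForm ρ h)
    {w : V} (hw : h w w ≠ 0) (hreal : ∀ g, starRingEnd ℂ (h w (ρ g w)) = h w (ρ g w)) (g : G) :
    starRingEnd ℂ (ρ.character g) = ρ.character g := by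
  have := Fintype.ofFinite G
  let f : Module.End ℂ V := ∑ x, ρ (x * g * x⁻¹)
  obtain ⟨c, hc⟩ := exists_eq_smul_of_commute (ρ := ρ) (f := f) fun y v ↦ by
    simp only [f, LinearMap.sum_apply, map_sum]
    refine Fintype.sum_equiv (Equiv.mulLeft y⁻¹) _ _ fun x ↦ ?_
    simp only [Equiv.coe_mulLeft, ← Module.End.mul_apply, ← map_mul]
    congr 2
    group
  have hcoef : ∑ x, h w (ρ (x * g * x⁻¹) w) = c * h w w := by
    rw [← smul_eq_mul, ← map_smul, ← hc]
    simp only [f, LinearMap.sum_apply, map_sum]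
  have hconj_c : starRingEnd ℂ c = c := by
    have key := congrArg (starRingEnd ℂ) hcoef
    rw [map_sum, Finset.sum_congr rfl fun x _ ↦ hreal _, map_mul, hh.conj_apply] at key
    exact mul_right_cancel₀ hw (key.symm.trans hcoef)
  have htrace : (Fintype.card G : ℂ) * ρ.character g = c * Module.finrank ℂ V := by
    have hf : f = c • LinearMap.id := LinearMap.ext hc
    have key : ∑ x, ρ.character (x * g * x⁻¹) = c * Module.finrank ℂ V := by
      rw [← LinearMap.trace_id, ← smul_eq_mul, ← map_smul, ← hf, map_sum]
      rfl
    simpa using key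
  refine mul_left_cancel₀ (Nat.cast_ne_zero.2 (Fintype.card_ne_zero (α := G))) ?_
  rw [htrace]
  simpa only [map_mul, map_natCast, hconj_c] using congrArg (starRingEnd ℂ) htrace

theorem isIrreducible_of_character_eq {W : Type*} [AddCommGroup W] [Module ℂ W]
    [FiniteDimensional ℂ W] [ρ.IsIrreducible] {σ : Representation ℂ G W}
    (hρσ : ρ.character = σ.character) : σ.IsIrreducible := by
  have := Fintype.ofFinite G
  have := nontrivial_of_isIrreducible ρ
  have : Invertible (Nat.card G : ℂ) := invertibleOfNonzero (Nat.cast_ne_zero.2 Nat.card_pos.ne')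
  have hdim : Module.finrank ℂ V = Module.finrank ℂ W := by
    have key := congrFun hρσ 1
    rw [Representation.char_one, Representation.char_one] at key
    exact_mod_cast key
  have hhom : Module.finrank ℂ (ρ.IntertwiningMap σ) = Module.finrank ℂ (ρ.IntertwiningMap ρ) := by
    have key := ρ.card_inv_mul_sum_char_mul_char_eq_finrank σ
    rw [← hρσ, ρ.card_inv_mul_sum_char_mul_char_eq_finrank ρ] at key
    exact_mod_cast key.symm
  obtain ⟨f, hf⟩ : ∃ f : ρ.IntertwiningMap σ, f ≠ 0 := by
    by_contra! hzero
    have : Subsingleton (ρ.IntertwiningMap σ) := ⟨fun f f' ↦ (hzero f).trans (hzero f').symm⟩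
    have hid : Representation.IntertwiningMap.id ρ ≠ 0 := fun h0 ↦ by
      obtain ⟨v, hv⟩ := exists_ne (0 : V)
      exact hv (congrArg (fun f : ρ.IntertwiningMap ρ ↦ f v) h0)
    have : Nontrivial (ρ.IntertwiningMap ρ) := ⟨_, _, hid⟩
    rw [Module.finrank_zero_of_subsingleton] at hhom
    exact Module.finrank_pos.ne hhom
  have hker : LinearMap.ker f.toLinearMap = ⊥ :=
    (eq_bot_or_eq_top_of_forall_apply_mem fun g _ hv ↦
      f.ker.apply_mem_toSubmodule g hv).resolve_right fun htop ↦
        hf (Representation.IntertwiningMap.ext (LinearMap.ker_eq_top.1 htop))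
  have hrange : LinearMap.range f.toLinearMap = ⊤ :=
    (LinearMap.ker_eq_bot_iff_range_eq_top_of_finrank_eq_finrank hdim).1 hker
  have : Nontrivial W := Module.nontrivial_of_finrank_pos (R := ℂ) (hdim ▸ Module.finrank_pos)
  refine isIrreducible_of_forall_apply_mem fun S hS ↦ ?_
  have hcomap : ∀ g, ∀ v ∈ S.comap f.toLinearMap, ρ g v ∈ S.comap f.toLinearMap := fun g v hv ↦ by
    rw [Submodule.mem_comap, f.toLinearMap_apply, f.isIntertwining]
    exact hS g _ hv
  rw [← Submodule.map_comap_eq_of_surjective (LinearMap.range_eq_top.1 hrange) S]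
  exact (eq_bot_or_eq_top_of_forall_apply_mem hcomap).imp
    (fun h0 ↦ by rw [h0, Submodule.map_bot]) fun h1 ↦ by rw [h1, Submodule.map_top, hrange]

end Character

section AddCharEigenspaces

variable {F V : Type*} [Field F] [Finite F] [AddCommGroup V] [Module ℂ V]

-- Fourier inversion on `F`: every vector is a sum of eigenvectors.
theorem le_of_forall_addChar_eigenvector_mem {φ : AddChar F ℂ} (hφ : φ.IsPrimitive)
    (σ : AddChar F (Module.End ℂ V)) {S T : Submodule ℂ V} (hS : ∀ y, ∀ v ∈ S, σ y v ∈ S)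
    (hT : ∀ c, ∀ v ∈ S, (∀ y, σ y v = φ (c * y) • v) → v ∈ T) : S ≤ T := fun v hv ↦ by
  classical
  have := Fintype.ofFinite F
  have hq : (Fintype.card F : ℂ) ≠ 0 := Nat.cast_ne_zero.2 Fintype.card_ne_zero
  let p (c : F) : V := ∑ y, φ (-(c * y)) • σ y v
  have hp : ∀ c, p c ∈ T := fun c ↦ by
    refine hT c _ (Submodule.sum_mem _ fun y _ ↦ Submodule.smul_mem _ _ (hS y v hv)) fun z ↦ ?_
    simp only [p, map_sum, map_smul, Finset.smul_sum]
    refine Fintype.sum_equiv (Equiv.addLeft z) _ _ fun y ↦ ?_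
    rw [Equiv.coe_addLeft, smul_smul, ← AddChar.map_add_eq_mul, AddChar.map_add_eq_mul σ,
      Module.End.mul_apply]
    congr 2
    ring
  have hsum : ∑ c, p c = (Fintype.card F : ℂ) • v := by
    rw [Finset.sum_comm]
    simp_rw [← Finset.sum_smul, neg_mul_eq_mul_neg, AddChar.sum_mulShift _ hφ, neg_eq_zero]
    simp
  rw [← inv_smul_smul₀ hq v, ← hsum]
  exact Submodule.smul_mem _ _ (Submodule.sum_mem _ fun c _ ↦ hp c)

end AddCharEigenspaces

section Hecke

variable {F G V : Type*} [Field F] [Group G] [AddCommGroup V] [Module ℂ V]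

/-- The relations of `SL₂`, or of `PGL₂`, in characteristic two, for a root subgroup `x`, an
involution `s` and a torus element `c t` for each scalar `t`. -/
structure IsRankOne (x : AddChar F G) (s : G) (c : Fˣ → G) : Prop where
  mul_self : s * s = 1
  mul_mul : ∀ t : Fˣ, s * x t * s = x ↑t⁻¹ * s * c t * x ↑t⁻¹

variable {ρ : Representation ℂ G V} {x : AddChar F G} {s : G} {c : Fˣ → G} {w : V}

theorem IsRankOne.apply_mul_mul (hx : IsRankOne x s c) (hxw : ∀ t, ρ (x t) w = w) {t : Fˣ} {a : ℂ}
    (hcw : ρ (c t) w = a • w) : ρ (s * x t * s) w = a • ρ (x ↑t⁻¹ * s) w := by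
  rw [hx.mul_mul, map_mul, map_mul, Module.End.mul_apply, Module.End.mul_apply, hxw, hcw, map_smul]

variable [Fintype F]

/-- The Hecke operator attached to the double coset of `s`. -/
def heckeOp (ρ : Representation ℂ G V) (x : AddChar F G) (s : G) : Module.End ℂ V :=
  ∑ t, ρ (x t * s)

theorem heckeOp_apply (v : V) : heckeOp ρ x s v = ∑ t, ρ (x t * s) v := by
  simp [heckeOp]

theorem apply_heckeOp_of_forall_mul {y : G} {y' : F → G} {a : ℂ} (f : Equiv.Perm F)
    (hy : ∀ t, y * (x t * s) = x (f t) * s * y' t) (hw : ∀ t, ρ (y' t) w = a • w) :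
    ρ y (heckeOp ρ x s w) = a • heckeOp ρ x s w := by
  rw [heckeOp_apply, map_sum, Finset.smul_sum]
  refine Fintype.sum_equiv f _ _ fun t ↦ ?_
  rw [← Module.End.mul_apply, ← map_mul, hy, map_mul, Module.End.mul_apply, hw, map_smul]

theorem sum_apply_add_mul (a : F) : ∑ t, ρ (x (t + a) * s) w = heckeOp ρ x s w := by
  rw [heckeOp_apply]
  exact Fintype.sum_equiv (Equiv.addRight a) _ _ fun t ↦ rfl

theorem heckeOp_heckeOp_of_ne_one (hx : IsRankOne x s c) (hxw : ∀ t, ρ (x t) w = w)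
    {χ : Fˣ →* ℂˣ} (hχ : χ ≠ 1) (hcw : ∀ t, ρ (c t) w = (χ t : ℂ) • w) :
    heckeOp ρ x s (heckeOp ρ x s w) = (Fintype.card F : ℂ) • w := by
  classical
  let χ' : MulChar F ℂ := MulChar.equivToUnitHom.symm χ
  have hχ' : χ' ≠ 1 := fun h1 ↦ hχ <| MonoidHom.ext fun t ↦ Units.ext <| by
    rw [← MulChar.equivToUnitHom_symm_coe, show MulChar.equivToUnitHom.symm χ = 1 from h1]
    simp
  have hterm : ∀ b, heckeOp ρ x s (ρ (x b * s) w) =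
      (if b = 0 then (Fintype.card F : ℂ) • w else 0) + χ' b • heckeOp ρ x s w := fun b ↦ by
    have hmul : ∀ a, ρ (x a * s) (ρ (x b * s) w) = ρ (x a) (ρ (s * x b * s) w) := fun a ↦ by
      simp only [← Module.End.mul_apply, ← map_mul, mul_assoc]
    rw [heckeOp_apply, Finset.sum_congr rfl fun a _ ↦ hmul a]
    obtain rfl | hb := eq_or_ne b 0
    · rw [χ'.map_zero]
      simp [hx.mul_self, hxw, ← Nat.cast_smul_eq_nsmul ℂ]
    · lift b to Fˣ using IsUnit.mk0 b hb
      simp_rw [hx.apply_mul_mul hxw (hcw b), map_smul, ← Finset.smul_sum, ← Module.End.mul_apply,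
        ← map_mul, ← mul_assoc, ← AddChar.map_add_eq_mul, sum_apply_add_mul]
      simp [χ']
  rw [heckeOp_apply w, map_sum, Finset.sum_congr rfl fun b _ ↦ hterm b, Finset.sum_add_distrib,
    ← Finset.sum_smul, MulChar.sum_eq_zero_of_ne_one hχ']
  simp

theorem heckeOp_ne_zero_of_ne_one (hx : IsRankOne x s c) (hxw : ∀ t, ρ (x t) w = w)
    {χ : Fˣ →* ℂˣ} (hχ : χ ≠ 1) (hcw : ∀ t, ρ (c t) w = (χ t : ℂ) • w) (hw : w ≠ 0) :
    heckeOp ρ x s w ≠ 0 := fun h0 ↦ by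
  have hsq := heckeOp_heckeOp_of_ne_one hx hxw hχ hcw
  rw [h0, map_zero] at hsq
  exact smul_ne_zero (Nat.cast_ne_zero.2 Fintype.card_ne_zero) hw hsq.symm

theorem apply_add_heckeOp (hx : IsRankOne x s c) (hxw : ∀ t, ρ (x t) w = w)
    (hcw : ∀ t, ρ (c t) w = w) :
    ρ s (w + heckeOp ρ x s w) = w + heckeOp ρ x s w := by
  classical
  have hterm : ∀ t, ρ (s * x t * s) w =
      ρ (x t⁻¹ * s) w + if t = 0 then w - ρ s w else 0 := fun t ↦ by
    obtain rfl | ht := eq_or_ne t 0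
    · simp [hx.mul_self]
    · lift t to Fˣ using IsUnit.mk0 t ht
      simpa using hx.apply_mul_mul hxw (a := 1) (by simpa using hcw t)
  have hinv : ∑ t : F, ρ (x t⁻¹ * s) w = heckeOp ρ x s w := by
    rw [heckeOp_apply]
    exact Fintype.sum_equiv (Equiv.inv F) _ _ fun t ↦ rfl
  have hsT : ρ s (heckeOp ρ x s w) = ∑ t, ρ (s * x t * s) w := by
    simp only [heckeOp_apply, map_sum, mul_assoc, map_mul, Module.End.mul_apply]
  rw [map_add, hsT, Finset.sum_congr rfl fun t _ ↦ hterm t, Finset.sum_add_distrib, hinv,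
    Finset.sum_ite_eq']
  simp
  abel

end Hecke

section Matrices

open Matrix.SpecialLinearGroup

notation "SL₃" => Matrix.SpecialLinearGroup (Fin 3)
notation "GL₃" => GL (Fin 3)

variable {F : Type*} [Field F]

/-- The upper unitriangular matrix with superdiagonal entries `a`, `c` and corner entry `b`. -/
def unip (a b c : F) : SL₃ F :=
  ⟨!![1, a, b; 0, 1, c; 0, 0, 1], by simp [det_fin_three]⟩

/-- The diagonal matrices of determinant one, parametrized by their last two entries. -/
def torusSL (b c : Fˣ) : SL₃ F :=
  ⟨!![↑(b * c)⁻¹, 0, 0; 0, ↑b, 0; 0, 0, ↑c], by simp [det_fin_three]⟩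

/-- The diagonal matrices in `GL₃`. -/
def torus : (Fin 3 → Fˣ) →* GL₃ F :=
  (Units.map (diagonalRingHom (Fin 3) F).toMonoidHom).comp
    (MulEquiv.piUnits (M := fun _ : Fin 3 ↦ F)).symm.toMonoidHom

/-- The permutation matrices: in characteristic two they have determinant one. -/
def permSL [CharP F 2] : Equiv.Perm (Fin 3) →* SL₃ F where
  toFun π := ⟨π⁻¹.permMatrix F, by
    rw [det_permutation]
    obtain h | h := Int.units_eq_one_or (Equiv.Perm.sign π⁻¹) <;> simp [h, CharTwo.neg_eq]⟩
  map_one' := Subtype.ext <| by simp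
  map_mul' π π' := Subtype.ext <| by
    change (π * π')⁻¹.permMatrix F = π⁻¹.permMatrix F * π'⁻¹.permMatrix F
    rw [_root_.mul_inv_rev, permMatrix_mul]

notation "s₁" => permSL (Equiv.swap (0 : Fin 3) 1)
notation "s₂" => permSL (Equiv.swap (1 : Fin 3) 2)

@[simp] theorem coe_unip (a b c : F) :
    (unip a b c : Matrix (Fin 3) (Fin 3) F) = !![1, a, b; 0, 1, c; 0, 0, 1] := rfl

@[simp] theorem coe_torusSL (b c : Fˣ) : (torusSL b c : Matrix (Fin 3) (Fin 3) F) =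
    !![↑(b * c)⁻¹, 0, 0; 0, ↑b, 0; 0, 0, ↑c] := rfl

@[simp] theorem coe_torus (t : Fin 3 → Fˣ) :
    (torus t : Matrix (Fin 3) (Fin 3) F) = diagonal fun i ↦ (t i : F) := rfl

theorem unip_mul (a b c a' b' c' : F) :
    unip a b c * unip a' b' c' = unip (a + a') (b + b' + a * c') (c + c') := by
  ext i j
  fin_cases i <;> fin_cases j <;> simp [add_comm, add_left_comm]
  ring

theorem unip_zero : unip (0 : F) 0 0 = 1 := by
  ext i j
  fin_cases i <;> fin_cases j <;> rfl

theorem unip_inv (a b c : F) : (unip a b c)⁻¹ = unip (-a) (a * c - b) (-c) := by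
  rw [inv_eq_iff_mul_eq_one, unip_mul, ← unip_zero]
  congr 1 <;> ring

theorem torus_mul_unip (t : Fin 3 → Fˣ) (a b c : F) : torus t * toGL (unip a b c) =
    toGL (unip (t 0 * a / t 1) (t 0 * b / t 2) (t 1 * c / t 2)) * torus t := by
  ext i j
  fin_cases i <;> fin_cases j <;> simp

theorem torus_mul_unip' (t : Fin 3 → Fˣ) (a b c : F) :
    torus t * toGL (unip (t 1 / t 0 * a) (t 2 / t 0 * b) (t 2 / t 1 * c)) =
      toGL (unip a b c) * torus t := by
  rw [torus_mul_unip]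
  congr 3 <;> field_simp

theorem toGL_torusSL (b c : Fˣ) : toGL (torusSL b c) = torus ![(b * c)⁻¹, b, c] := by
  ext i j
  fin_cases i <;> fin_cases j <;> simp

/-- The root subgroup of `E₁₂`. -/
def root₁ : AddChar F (SL₃ F) where
  toFun y := unip y 0 0
  map_zero_eq_one' := unip_zero
  map_add_eq_mul' y z := by simp [unip_mul]

/-- The root subgroup of `E₂₃`. -/
def root₂ : AddChar F (SL₃ F) where
  toFun y := unip 0 0 y
  map_zero_eq_one' := unip_zero
  map_add_eq_mul' y z := by simp [unip_mul]

/-- The root subgroup of `E₁₃`. -/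
def root₁₂ : AddChar F (SL₃ F) where
  toFun y := unip 0 y 0
  map_zero_eq_one' := unip_zero
  map_add_eq_mul' y z := by simp [unip_mul]

theorem root₁_apply (y : F) : root₁ y = unip y 0 0 := rfl

theorem root₂_apply (y : F) : root₂ y = unip 0 0 y := rfl

theorem root₁₂_apply (y : F) : root₁₂ y = unip 0 y 0 := rfl

variable [CharP F 2]

theorem permSL_apply (π : Equiv.Perm (Fin 3)) (i j : Fin 3) :
    permSL (F := F) π i j = if i = π j then 1 else 0 := by
  change (π⁻¹.permMatrix F) i j = _
  simp [PEquiv.toMatrix_apply, Equiv.Perm.inv_def, Equiv.symm_apply_eq]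

theorem coe_s₁ : ((s₁ : SL₃ F) : Matrix (Fin 3) (Fin 3) F) = !![0, 1, 0; 1, 0, 0; 0, 0, 1] := by
  ext i j
  rw [permSL_apply]
  fin_cases i <;> fin_cases j <;> first | exact if_pos (by decide) | exact if_neg (by decide)

theorem coe_s₂ : ((s₂ : SL₃ F) : Matrix (Fin 3) (Fin 3) F) = !![1, 0, 0; 0, 0, 1; 0, 1, 0] := by
  ext i j
  rw [permSL_apply]
  fin_cases i <;> fin_cases j <;> first | exact if_pos (by decide) | exact if_neg (by decide)

theorem torus_mul_permSL (t : Fin 3 → Fˣ) (π : Equiv.Perm (Fin 3)) :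
    torus t * toGL (permSL π) = toGL (permSL π) * torus (t ∘ π) := by
  ext i j
  simp [permSL_apply]
  grind

theorem s₁_mul_unip (b c : F) : s₁ * unip 0 b c = unip 0 c b * s₁ := by
  ext i j
  fin_cases i <;> fin_cases j <;> simp [coe_s₁]

theorem s₂_mul_unip (a b : F) : s₂ * unip a b 0 = unip b a 0 * s₂ := by
  ext i j
  fin_cases i <;> fin_cases j <;> simp [coe_s₂]

theorem isRankOne_root₁ : IsRankOne (root₁ (F := F)) s₁ fun t ↦ torusSL t⁻¹ 1 where
  mul_self := by rw [← map_mul, Equiv.swap_mul_self, map_one]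
  mul_mul t := by
    ext i j
    fin_cases i <;> fin_cases j <;> simp [coe_s₁, root₁_apply, CharTwo.add_self_eq_zero]

theorem isRankOne_root₂ : IsRankOne (root₂ (F := F)) s₂ fun t ↦ torusSL t t⁻¹ where
  mul_self := by rw [← map_mul, Equiv.swap_mul_self, map_one]
  mul_mul t := by
    ext i j
    fin_cases i <;> fin_cases j <;> simp [coe_s₂, root₂_apply, CharTwo.add_self_eq_zero]

theorem mul_root₂_mul_s₂ (a b c t : F) :
    unip a b c * (root₂ t * s₂) = root₂ (c + t) * s₂ * unip (b + a * t) a 0 := by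
  simp only [root₂_apply, mul_assoc, s₂_mul_unip]
  simp only [← mul_assoc, unip_mul, add_zero, zero_add, mul_zero]

theorem mul_root₁_mul_s₁ (a b c t : F) :
    unip a b c * (root₁ t * s₁) = root₁ (a + t) * s₁ * unip 0 c (b - (a + t) * c) := by
  simp only [root₁_apply, mul_assoc, s₁_mul_unip]
  simp only [← mul_assoc, unip_mul, add_zero, zero_add, mul_zero, sub_add_cancel]

end Matrices

section Bruhat

open Matrix.SpecialLinearGroup

variable {F : Type*} [Field F]

theorem exists_eq_torus_mul_unip {g : GL₃ F} (h₁₀ : g 1 0 = 0) (h₂₀ : g 2 0 = 0)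
    (h₂₁ : g 2 1 = 0) : ∃ t a b c, g = torus t * toGL (unip a b c) := by
  have hdet : g 0 0 * g 1 1 * g 2 2 ≠ 0 := fun h0 ↦ g.det_ne_zero <| by
    rw [det_fin_three, h₁₀, h₂₀, h₂₁, h0]
    ring
  have h0 := left_ne_zero_of_mul (left_ne_zero_of_mul hdet)
  have h1 := right_ne_zero_of_mul (left_ne_zero_of_mul hdet)
  refine ⟨![Units.mk0 _ h0, Units.mk0 _ h1, Units.mk0 _ (right_ne_zero_of_mul hdet)],
    g 0 1 / g 0 0, g 0 2 / g 0 0, g 1 2 / g 1 1, ?_⟩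
  ext i j
  fin_cases i <;> fin_cases j <;> simp [h0, h1, h₁₀, h₂₀, h₂₁, mul_div_cancel₀]

variable [CharP F 2]

theorem exists_bruhat_of_apply_eq_zero {g : GL₃ F} (h₁₀ : g 1 0 = 0) (h₂₀ : g 2 0 = 0) :
    ∃ (y : F) (π : Equiv.Perm (Fin 3)) (t : Fin 3 → Fˣ) (a b c : F),
      g = toGL (unip 0 0 y * permSL π) * (torus t * toGL (unip a b c)) := by
  obtain h₂₁ | h₂₁ := eq_or_ne (g 2 1) 0
  · obtain ⟨t, a, b, c, hg⟩ := exists_eq_torus_mul_unip h₁₀ h₂₀ h₂₁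
    exact ⟨0, 1, t, a, b, c, by simpa [unip_zero] using hg⟩
  · obtain ⟨t, a, b, c, hg⟩ := exists_eq_torus_mul_unip
      (g := (toGL (unip 0 0 (g 1 1 / g 2 1) * s₂))⁻¹ * g)
      (by simp [← map_inv, unip_inv, coe_s₂, mul_apply, Fin.sum_univ_three, h₁₀, h₂₀])
      (by simp [← map_inv, unip_inv, coe_s₂, mul_apply, Fin.sum_univ_three, h₁₀, h₂₀])
      (by simp [← map_inv, unip_inv, coe_s₂, mul_apply, Fin.sum_univ_three, h₂₁])
    exact ⟨_, Equiv.swap 1 2, t, a, b, c, inv_mul_eq_iff_eq_mul.1 hg⟩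

theorem exists_bruhat (g : GL₃ F) : ∃ (a b c : F) (π : Equiv.Perm (Fin 3)) (t : Fin 3 → Fˣ)
    (a' b' c' : F), g = toGL (unip a b c * permSL π) * (torus t * toGL (unip a' b' c')) := by
  obtain h₂₀ | h₂₀ := eq_or_ne (g 2 0) 0
  · obtain h₁₀ | h₁₀ := eq_or_ne (g 1 0) 0
    · obtain ⟨y, π, t, a, b, c, hg⟩ := exists_bruhat_of_apply_eq_zero h₁₀ h₂₀
      exact ⟨0, 0, y, π, t, a, b, c, hg⟩
    · let x := g 0 0 / g 1 0
      obtain ⟨y, π, t, a, b, c, hg⟩ := exists_bruhat_of_apply_eq_zero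
        (g := (toGL (unip x 0 0 * s₁))⁻¹ * g)
        (by simp [← map_inv, unip_inv, coe_s₁, mul_apply, Fin.sum_univ_three, x, h₁₀])
        (by simp [← map_inv, unip_inv, coe_s₁, mul_apply, Fin.sum_univ_three, h₂₀])
      have hu : unip x 0 0 * s₁ * (unip 0 0 y * permSL π) =
          unip x y 0 * permSL (Equiv.swap 0 1 * π) := by
        rw [mul_assoc, ← mul_assoc s₁, s₁_mul_unip, map_mul]
        simp only [← mul_assoc, unip_mul, add_zero, zero_add, mul_zero]
      exact ⟨x, y, 0, _, t, a, b, c, by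
        rw [← hu, map_mul toGL, mul_assoc, ← hg, mul_inv_cancel_left]⟩
  · let x := g 0 0 / g 2 0
    let z := g 1 0 / g 2 0
    obtain ⟨y, π, t, a, b, c, hg⟩ := exists_bruhat_of_apply_eq_zero
      (g := (toGL (unip 0 x z * s₂ * s₁))⁻¹ * g)
      (by simp [← map_inv, unip_inv, coe_s₁, coe_s₂, mul_apply, Fin.sum_univ_three, x, h₂₀])
      (by simp [← map_inv, unip_inv, coe_s₁, coe_s₂, mul_apply, Fin.sum_univ_three, z, h₂₀])
    have hu : unip 0 x z * s₂ * s₁ * (unip 0 0 y * permSL π) =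
        unip y x z * permSL (Equiv.swap 1 2 * Equiv.swap 0 1 * π) := by
      rw [mul_assoc, ← mul_assoc s₁, s₁_mul_unip, mul_assoc (unip 0 x z), ← mul_assoc s₂,
        ← mul_assoc s₂, s₂_mul_unip, map_mul, map_mul]
      simp only [← mul_assoc, unip_mul, add_zero, zero_add, zero_mul]
    exact ⟨y, x, z, _, t, a, b, c, by
      rw [← hu, map_mul toGL, mul_assoc, ← hg, mul_inv_cancel_left]⟩

end Bruhat

section Subgroups

open Matrix.SpecialLinearGroup LinearAlgebra.Projectivization

variable {F : Type*} [Field F]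

/-- The upper unitriangular matrices, a Sylow subgroup of `GL₃ F` in the defining characteristic. -/
def unipSubgroup : Subgroup (SL₃ F) where
  carrier := {g | ∃ a b c, unip a b c = g}
  one_mem' := ⟨0, 0, 0, unip_zero⟩
  mul_mem' := by
    rintro _ _ ⟨a, b, c, rfl⟩ ⟨a', b', c', rfl⟩
    exact ⟨_, _, _, (unip_mul a b c a' b' c').symm⟩
  inv_mem' := by
    rintro _ ⟨a, b, c, rfl⟩
    exact ⟨_, _, _, (unip_inv a b c).symm⟩

theorem card_unipSubgroup : Nat.card (unipSubgroup (F := F)) = Nat.card F ^ 3 := by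
  have hbij : Function.Bijective fun x : F × F × F ↦
      (⟨unip x.1 x.2.1 x.2.2, _, _, _, rfl⟩ : unipSubgroup (F := F)) := by
    refine ⟨fun x y hxy ↦ ?_, fun ⟨_, a, b, c, hg⟩ ↦ ⟨(a, b, c), Subtype.ext hg⟩⟩
    have hentry (i j : Fin 3) := congrArg (fun g : unipSubgroup (F := F) ↦ (g : SL₃ F) i j) hxy
    exact Prod.ext (hentry 0 1) (Prod.ext (hentry 0 2) (hentry 1 2))
  rw [← Nat.card_congr (Equiv.ofBijective _ hbij), Nat.card_prod, Nat.card_prod]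
  ring

theorem even_card_of_charP_two [Finite F] [CharP F 2] : Even (Nat.card F) := by
  have := Fintype.ofFinite F
  rw [Nat.card_eq_fintype_card, Nat.even_iff]
  exact FiniteField.even_card_of_char_two (ringChar.eq F 2)

theorem odd_index_map_unipSubgroup [Finite F] [CharP F 2] :
    Odd (unipSubgroup.map (toGL (n := Fin 3) (R := F))).index := by
  have := Fintype.ofFinite F
  have hq := even_card_of_charP_two (F := F)
  set q := Nat.card F
  have hq1 : 1 ≤ q := Nat.card_pos
  have hq2 : 1 ≤ q ^ 2 := Nat.one_le_pow _ _ hq1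
  have hq3 : 1 ≤ q ^ 3 := Nat.one_le_pow _ _ hq1
  have hcard : (unipSubgroup.map (toGL (n := Fin 3) (R := F))).index =
      (q ^ 3 - 1) * (q ^ 2 - 1) * (q - 1) := by
    refine Nat.eq_of_mul_eq_mul_left (pow_pos hq1 3) ?_
    have key := (unipSubgroup.map (toGL (n := Fin 3) (R := F))).card_mul_index
    rw [Subgroup.card_map_of_injective toGL_injective, card_unipSubgroup, card_GL_field,
      Fin.prod_univ_three, ← Nat.card_eq_fintype_card] at key
    rw [key]
    simp only [Fin.val_zero, Fin.val_one, Fin.val_two, pow_zero, pow_one]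
    rw [show q ^ 3 - q = q * (q ^ 2 - 1) by rw [Nat.mul_sub]; ring_nf,
      show q ^ 3 - q ^ 2 = q ^ 2 * (q - 1) by rw [Nat.mul_sub]; ring_nf]
    ring
  rw [hcard]
  exact ((Nat.Even.sub_odd hq3 (hq.pow_of_ne_zero three_ne_zero) odd_one).mul
    (Nat.Even.sub_odd hq2 (hq.pow_of_ne_zero two_ne_zero) odd_one)).mul
    (Nat.Even.sub_odd hq1 hq odd_one)

/-- The stabilizer of the line spanned by the first standard basis vector. -/
def parabolic : Subgroup (GL₃ F) :=
  (MulAction.stabilizer (LinearMap.GeneralLinearGroup F (Fin 3 → F))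
    (Projectivization.mk F (Pi.single 0 1 : Fin 3 → F) (by simp))).comap
      Matrix.GeneralLinearGroup.toLin.toMonoidHom

theorem mem_parabolic {g : GL₃ F} : g ∈ parabolic ↔ g 1 0 = 0 ∧ g 2 0 = 0 := by
  rw [parabolic, Subgroup.mem_comap, MulAction.mem_stabilizer_iff,
    Projectivization.smul_mk, Projectivization.mk_eq_mk_iff']
  change (∃ a : F, a • Pi.single 0 1 = (g : Matrix (Fin 3) (Fin 3) F) *ᵥ Pi.single 0 1) ↔ _
  simp only [mulVec_single_one, funext_iff, Fin.forall_fin_succ]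
  simp [eq_comm]

theorem index_comap_parabolic [Finite F] :
    (parabolic.comap (toGL (n := Fin 3) (R := F))).index = Nat.card F ^ 2 + Nat.card F + 1 := by
  let x := Projectivization.mk F (Pi.single 0 1 : Fin 3 → F) (by simp)
  have hstab : parabolic.comap toGL = MulAction.stabilizer (SL₃ F) x := rfl
  have : MulAction.IsPretransitive (SL₃ F) (ℙ F (Fin 3 → F)) := inferInstance
  rw [hstab, MulAction.index_stabilizer_of_transitive,
    Projectivization.card_of_finrank F _ (Module.finrank_fin_fun F)]
  simp [Finset.sum_range_succ]
  ring

theorem toGL_unip_mem_parabolic (a b c : F) : toGL (unip a b c) ∈ parabolic := by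
  simp [mem_parabolic]

theorem torus_mem_parabolic (t : Fin 3 → Fˣ) : torus t ∈ parabolic := by
  simp [mem_parabolic]

theorem map_unipSubgroup_le_parabolic : unipSubgroup.map toGL ≤ parabolic (F := F) := by
  rintro _ ⟨_, ⟨a, b, c, rfl⟩, rfl⟩
  exact toGL_unip_mem_parabolic a b c

variable [CharP F 2]

theorem toGL_permSL_mem_parabolic {π : Equiv.Perm (Fin 3)} :
    toGL (permSL (F := F) π) ∈ parabolic ↔ π 0 = 0 := by
  have h3 : π 0 = 0 ∨ π 0 = 1 ∨ π 0 = 2 := by generalize π 0 = i; fin_cases i <;> simp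
  obtain h | h | h := h3 <;> simp [mem_parabolic, permSL_apply, h]

theorem exists_mul_s₁_mul_of_notMem_parabolic {g : GL₃ F} (hg : g ∉ parabolic) :
    ∃ p ∈ parabolic, ∃ p' ∈ parabolic, g = p * toGL s₁ * p' := by
  obtain ⟨a, b, c, π, t, a', b', c', rfl⟩ := exists_bruhat g
  have hπ : π 0 ≠ 0 := fun h0 ↦ hg <| by
    rw [map_mul]
    exact mul_mem (mul_mem (toGL_unip_mem_parabolic _ _ _) (toGL_permSL_mem_parabolic.2 h0))
      (mul_mem (torus_mem_parabolic _) (toGL_unip_mem_parabolic _ _ _))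
  have hdecomp : ∀ π : Equiv.Perm (Fin 3), π 0 ≠ 0 →
      ∃ π₁ π₂ : Equiv.Perm (Fin 3), π₁ 0 = 0 ∧ π₂ 0 = 0 ∧ π = π₁ * Equiv.swap 0 1 * π₂ := by
    decide
  obtain ⟨π₁, π₂, h₁, h₂, rfl⟩ := hdecomp π hπ
  refine ⟨toGL (unip a b c * permSL π₁), ?_, toGL (permSL π₂) * (torus t * toGL (unip a' b' c')),
    ?_, by simp only [map_mul, mul_assoc]⟩
  · rw [map_mul]
    exact mul_mem (toGL_unip_mem_parabolic _ _ _) (toGL_permSL_mem_parabolic.2 h₁)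
  · exact mul_mem (toGL_permSL_mem_parabolic.2 h₂)
      (mul_mem (torus_mem_parabolic _) (toGL_unip_mem_parabolic _ _ _))

end Subgroups

section Whittaker

open Matrix.SpecialLinearGroup

variable {F V : Type*} [Field F] [AddCommGroup V] [Module ℂ V]

/-- The character of the upper unitriangular group given by a pair of additive characters on the
superdiagonal entries. -/
def unipChar (φ φ' : AddChar F ℂ) : unipSubgroup (F := F) →* ℂˣ :=
  MonoidHom.toHomUnits
    { toFun := fun g ↦ φ ((g : SL₃ F) 0 1) * φ' ((g : SL₃ F) 1 2)
      map_one' := by simp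
      map_mul' := by
        rintro ⟨_, a, b, c, rfl⟩ ⟨_, a', b', c', rfl⟩
        change φ ((unip a b c * unip a' b' c') 0 1) * φ' ((unip a b c * unip a' b' c') 1 2) =
          φ a * φ' c * (φ a' * φ' c')
        rw [unip_mul, ← mul_mul_mul_comm, ← AddChar.map_add_eq_mul, ← AddChar.map_add_eq_mul]
        rfl }

theorem unipChar_unip (φ φ' : AddChar F ℂ) (a b c : F) :
    (unipChar φ φ' ⟨unip a b c, a, b, c, rfl⟩ : ℂ) = φ a * φ' c := rfl

/-- The Whittaker space of a representation of `GL₃ F`, also for degenerate characters: for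
trivial `φ` and `φ'` it consists of the vectors fixed by the upper unitriangular matrices. -/
def whittaker (ρ : Representation ℂ (GL₃ F) V) (φ φ' : AddChar F ℂ) : Submodule ℂ V :=
  weightSpace (ρ.comp (toGL.comp unipSubgroup.subtype)) (unipChar φ φ')

variable {ρ : Representation ℂ (GL₃ F) V} {φ φ' : AddChar F ℂ} {v w : V}

theorem mem_whittaker : v ∈ whittaker ρ φ φ' ↔
    ∀ a b c, ρ (toGL (unip a b c)) v = (φ a * φ' c) • v :=
  ⟨fun hv a b c ↦ hv ⟨_, a, b, c, rfl⟩, fun hv ⟨_, a, b, c, hg⟩ ↦ by subst hg; exact hv a b c⟩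

theorem apply_torus_mem_whittaker (hv : v ∈ whittaker ρ φ φ') (t : Fin 3 → Fˣ) :
    ρ (torus t) v ∈
      whittaker ρ (φ.mulShift (t 1 / t 0 : Fˣ)) (φ'.mulShift (t 2 / t 1 : Fˣ)) := by
  refine mem_whittaker.2 fun a b c ↦ ?_
  rw [← Module.End.mul_apply, ← map_mul, ← torus_mul_unip', map_mul, Module.End.mul_apply,
    mem_whittaker.1 hv, map_smul]
  simp

theorem apply_mulSingle_mem_whittaker (hv : v ∈ whittaker ρ φ φ') (t : Fˣ) :
    ρ (torus (Pi.mulSingle 2 t)) v ∈ whittaker ρ φ (φ'.mulShift t) := by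
  refine mem_whittaker.2 fun a b c ↦ ?_
  simpa using mem_whittaker.1 (apply_torus_mem_whittaker hv (Pi.mulSingle 2 t)) a b c

variable {h : V →ₗ⋆[ℂ] V →ₗ[ℂ] ℂ}

theorem IsInvariantForm.apply_unip_mul_mul_unip [Finite F] (hh : IsInvariantForm ρ h)
    (hv : v ∈ whittaker ρ φ φ') (hw : w ∈ whittaker ρ φ φ') (a b c a' b' c' : F) (m : GL₃ F) :
    h v (ρ (toGL (unip a b c) * m * toGL (unip a' b' c')) w) =
      φ a * φ' c * (φ a' * φ' c') * h v (ρ m w) := by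
  simp only [map_mul, Module.End.mul_apply, mem_whittaker.1 hw, map_smul, smul_eq_mul,
    hh.apply_right_of_eq_smul (mem_whittaker.1 hv a b c)]
  ring

theorem IsInvariantForm.eq_of_mul_unip_eq [Finite F] (hh : IsInvariantForm ρ h)
    (hv : v ∈ whittaker ρ φ φ') (hw : w ∈ whittaker ρ φ φ') {m : GL₃ F} (hm : h v (ρ m w) ≠ 0)
    {a b c a' b' c' : F} (hu : m * toGL (unip a b c) = toGL (unip a' b' c') * m) :
    φ a * φ' c = φ a' * φ' c' := by
  have hl := hh.apply_unip_mul_mul_unip hv hw 0 0 0 a b c m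
  have hr := hh.apply_unip_mul_mul_unip hv hw a' b' c' 0 0 0 m
  simp only [unip_zero, map_one, mul_one, one_mul, AddChar.map_zero_eq_one, hu] at hl hr
  exact mul_right_cancel₀ hm (hl.symm.trans hr)

end Whittaker

section Antitranspose

open Matrix.SpecialLinearGroup

variable {F : Type*} [Field F]

/-- The transpose along the other diagonal, an anti-automorphism of `GL₃ F` preserving the upper
unitriangular matrices. -/
def antitranspose (g : GL₃ F) : GL₃ F where
  val := ((g : Matrix (Fin 3) (Fin 3) F).submatrix Fin.revPerm Fin.revPerm)ᵀ
  inv := (((g⁻¹ : GL₃ F) : Matrix (Fin 3) (Fin 3) F).submatrix Fin.revPerm Fin.revPerm)ᵀ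
  val_inv := by rw [← transpose_mul, submatrix_mul_equiv, Units.inv_mul]; simp
  inv_val := by rw [← transpose_mul, submatrix_mul_equiv, Units.mul_inv]; simp

@[simp] theorem antitranspose_apply (g : GL₃ F) (i j : Fin 3) :
    antitranspose g i j = g j.rev i.rev := rfl

theorem antitranspose_mul (g g' : GL₃ F) :
    antitranspose (g * g') = antitranspose g' * antitranspose g :=
  Units.ext <| by simp [antitranspose, ← transpose_mul]

theorem antitranspose_antitranspose (g : GL₃ F) : antitranspose (antitranspose g) = g := by
  ext i j
  simp

theorem antitranspose_permSL_mul_torus [CharP F 2] (π : Equiv.Perm (Fin 3)) (t : Fin 3 → Fˣ) :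
    antitranspose (toGL (permSL π) * torus t) =
      toGL (permSL (Fin.revPerm * π⁻¹ * Fin.revPerm)) *
        torus (t ∘ (π⁻¹ * Fin.revPerm : Equiv.Perm (Fin 3))) := by
  ext i j
  simp [-map_mul, permSL_apply, Equiv.Perm.inv_def, Fin.rev_eq_iff]
  grind

theorem antitranspose_toGL_unip (a b c : F) :
    antitranspose (toGL (unip a b c)) = toGL (unip c b a) := by
  ext i j
  fin_cases i <;> fin_cases j <;> rfl

/-- The automorphism of `GL₃ F` induced by the symmetry of the Dynkin diagram. -/
def dynkinHom : GL₃ F →* GL₃ F where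
  toFun g := antitranspose g⁻¹
  map_one' := by ext i j; fin_cases i <;> fin_cases j <;> simp
  map_mul' g g' := by rw [_root_.mul_inv_rev, antitranspose_mul]

theorem dynkinHom_surjective : Function.Surjective (dynkinHom (F := F)) := fun g ↦
  ⟨(antitranspose g)⁻¹, by ext i j; simp [dynkinHom]⟩

theorem dynkinHom_toGL_unip (a b c : F) :
    dynkinHom (toGL (unip a b c)) = toGL (unip (-c) (a * c - b) (-a)) := by
  change antitranspose (toGL (unip a b c))⁻¹ = _
  rw [← map_inv, unip_inv, antitranspose_toGL_unip]

end Antitranspose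

section GelfandGraev

open Matrix.SpecialLinearGroup

variable {F : Type*} [Field F] {φ : AddChar F ℂ}

theorem eq_of_forall_apply_mul_eq (hφ : φ.IsPrimitive) {j k : F}
    (h : ∀ a, φ (j * a) = φ (k * a)) : j = k :=
  AddChar.to_mulShift_inj_of_isPrimitive hφ <| DFunLike.ext _ _ h

variable [CharP F 2]

theorem finRotate_mul_unip (y : F) :
    permSL (finRotate 3) * unip y 0 0 = unip 0 0 y * permSL (finRotate 3) := by
  ext i j
  fin_cases i <;> fin_cases j <;> simp [mul_apply, Fin.sum_univ_three, permSL_apply]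

theorem finRotate_symm_mul_unip (y : F) :
    permSL (finRotate 3).symm * unip 0 0 y = unip y 0 0 * permSL (finRotate 3).symm := by
  rw [← Equiv.Perm.inv_def, map_inv, inv_mul_eq_iff_eq_mul, ← mul_assoc, finRotate_mul_unip,
    mul_inv_cancel_right]

variable {V : Type*} [Finite F] [AddCommGroup V] [Module ℂ V] {ρ : Representation ℂ (GL₃ F) V}
  {h : V →ₗ⋆[ℂ] V →ₗ[ℂ] ℂ} {v w : V}

theorem IsInvariantForm.eq_of_permSL_mul_unip_eq (hh : IsInvariantForm ρ h)
    (hv : v ∈ whittaker ρ φ φ) (hw : w ∈ whittaker ρ φ φ) {π : Equiv.Perm (Fin 3)}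
    {t : Fin 3 → Fˣ} (hm : h v (ρ (toGL (permSL π) * torus t) w) ≠ 0) {a b c a' b' c' : F}
    (hu : permSL π * unip a b c = unip a' b' c' * permSL π) :
    φ (t 1 / t 0 * a) * φ (t 2 / t 1 * c) = φ a' * φ c' :=
  hh.eq_of_mul_unip_eq hv hw hm <| by
    rw [mul_assoc, torus_mul_unip', ← mul_assoc, ← map_mul, hu, map_mul, mul_assoc]

theorem IsInvariantForm.cases_of_apply_ne_zero (hh : IsInvariantForm ρ h) (hφ : φ.IsPrimitive)
    (hv : v ∈ whittaker ρ φ φ) (hw : w ∈ whittaker ρ φ φ) {π : Equiv.Perm (Fin 3)}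
    {t : Fin 3 → Fˣ} (hm : h v (ρ (toGL (permSL π) * torus t) w) ≠ 0) :
    (π = 1 ∧ t 0 = t 1 ∧ t 1 = t 2) ∨ (π = finRotate 3 ∧ t 0 = t 1) ∨
      (π = (finRotate 3).symm ∧ t 1 = t 2) ∨ π = Equiv.swap 0 2 := by
  have hperm : ∀ π : Equiv.Perm (Fin 3), π = 1 ∨ π = finRotate 3 ∨ π = (finRotate 3).symm ∨
      π = Equiv.swap 0 2 ∨ π = Equiv.swap 0 1 ∨ π = Equiv.swap 1 2 := by decide
  have key {a b c a' b' c' : F} := hh.eq_of_permSL_mul_unip_eq (a := a) (b := b) (c := c)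
    (a' := a') (b' := b') (c' := c') hv hw hm
  have heq {i j : Fin 3} (h1 : ∀ y, φ (t j / t i * y) = φ (1 * y)) : t i = t j := by
    have := eq_of_forall_apply_mul_eq hφ h1
    field_simp at this
    exact Units.ext this.symm
  have hne (h0 : ∀ y, φ (1 * y) = φ (0 * y)) : False :=
    one_ne_zero (eq_of_forall_apply_mul_eq hφ h0)
  have hone (a c : F) : permSL 1 * unip a 0 c = unip a 0 c * permSL 1 := by simp
  obtain rfl | rfl | rfl | rfl | rfl | rfl := hperm π
  · exact .inl ⟨rfl, heq fun y ↦ by simpa using key (hone y 0),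
      heq fun y ↦ by simpa using key (hone 0 y)⟩
  · exact .inr <| .inl ⟨rfl, heq fun y ↦ by simpa using key (finRotate_mul_unip y)⟩
  · exact .inr <| .inr <| .inl ⟨rfl, heq fun y ↦ by simpa using key (finRotate_symm_mul_unip y)⟩
  · simp
  · exact (hne fun y ↦ by simpa using (key (s₁_mul_unip y 0)).symm).elim
  · exact (hne fun y ↦ by simpa using (key (s₂_mul_unip 0 y)).symm).elim

theorem IsInvariantForm.antitranspose_eq_of_apply_ne_zero (hh : IsInvariantForm ρ h)
    (hφ : φ.IsPrimitive) (hv : v ∈ whittaker ρ φ φ) (hw : w ∈ whittaker ρ φ φ)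
    {π : Equiv.Perm (Fin 3)} {t : Fin 3 → Fˣ}
    (hm : h v (ρ (toGL (permSL π) * torus t) w) ≠ 0) :
    antitranspose (toGL (permSL π) * torus t) = toGL (permSL π) * torus t := by
  have h₁ : (1 : Fin 3) ≠ -1 := by decide
  have h₂ : Equiv.swap (0 : Fin 3) 2 1 = 1 := by decide
  ext i j
  obtain ⟨rfl, h01, h12⟩ | ⟨rfl, h01⟩ | ⟨rfl, h12⟩ | rfl :=
    hh.cases_of_apply_ne_zero hφ hv hw hm <;>
  fin_cases i <;> fin_cases j <;> simp [permSL_apply, *]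

variable [FiniteDimensional ℂ V] [ρ.IsIrreducible]

theorem finrank_whittaker_le_one (hφ : φ.IsPrimitive) :
    Module.finrank ℂ (whittaker ρ φ φ) ≤ 1 := by
  have := Fintype.ofFinite (unipSubgroup (F := F))
  obtain ⟨h, hh⟩ := exists_isInvariantInner ρ
  let t : unipSubgroup (F := F) → unipSubgroup (F := F) := fun u ↦
    ⟨unip ((u : SL₃ F) 1 2) ((u : SL₃ F) 0 2) ((u : SL₃ F) 0 1), _, _, _, rfl⟩
  have ht : Function.Involutive t := fun ⟨_, a, b, c, hu⟩ ↦ Subtype.ext <| by subst hu; rfl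
  refine finrank_weightSpace_le_one hh antitranspose_mul (ht.toPerm t) ?_ ?_ ?_
  · rintro ⟨_, a, b, c, rfl⟩
    exact antitranspose_toGL_unip a b c
  · rintro ⟨_, a, b, c, rfl⟩
    exact Units.ext (mul_comm (φ c) (φ a))
  · intro v hv w hw g
    obtain ⟨a, b, c, π, d, a', b', c', rfl⟩ := exists_bruhat g
    rw [map_mul, mul_assoc, ← mul_assoc (toGL (permSL π)), ← mul_assoc, antitranspose_mul,
      antitranspose_mul, antitranspose_toGL_unip, antitranspose_toGL_unip, ← mul_assoc,
      hh.apply_unip_mul_mul_unip hv hw, hh.apply_unip_mul_mul_unip hv hw, mul_comm (φ c'),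
      mul_comm (φ c), mul_comm (φ a' * φ c')]
    refine congrArg _ ?_
    obtain hm | hm := eq_or_ne (h v (ρ (toGL (permSL π) * torus d) w)) 0
    · by_contra hne
      rw [hm, antitranspose_permSL_mul_torus] at hne
      have hfix := hh.antitranspose_eq_of_apply_ne_zero hφ hv hw hne
      rw [← antitranspose_permSL_mul_torus, antitranspose_antitranspose] at hfix
      rw [← antitranspose_permSL_mul_torus, ← hfix] at hne
      exact hne hm
    · rw [hh.antitranspose_eq_of_apply_ne_zero hφ hv hw hm]

end GelfandGraev

section Radical

open Matrix.SpecialLinearGroup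

variable {F V : Type*} [Field F] [AddCommGroup V] [Module ℂ V]
  {ρ : Representation ℂ (GL₃ F) V} {φ φ' : AddChar F ℂ} {v w : V}

/-- The eigenspaces of the unipotent radical of `parabolic`, whose characters are parametrized by
the coefficients of a linear form; the vectors fixed by the radical have `α = β = 0`. -/
def radEigenspace (ρ : Representation ℂ (GL₃ F) V) (φ : AddChar F ℂ) (α β : F) :
    Submodule ℂ V where
  carrier := {v | ∀ a b, ρ (toGL (unip a b 0)) v = φ (α * a + β * b) • v}
  add_mem' hv hw a b := by rw [map_add, hv, hw, smul_add]
  zero_mem' a b := by simp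
  smul_mem' c v hv a b := by rw [map_smul, hv, smul_comm]

theorem whittaker_le_radEigenspace : whittaker ρ 1 φ ≤ radEigenspace ρ φ' 0 0 :=
  fun v hv a b ↦ by simpa using mem_whittaker.1 hv a b 0

theorem mem_whittaker_of_mem_radEigenspace {α : F} (hv : v ∈ radEigenspace ρ φ α 0)
    (hφ' : ∀ c, ρ (toGL (root₂ c)) v = φ' c • v) : v ∈ whittaker ρ (φ.mulShift α) φ' := by
  refine mem_whittaker.2 fun a b c ↦ ?_
  rw [show unip a b c = root₂ c * unip a b 0 by simp [root₂_apply, unip_mul], map_mul, map_mul,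
    Module.End.mul_apply, hv, map_smul, hφ', smul_smul]
  simp

theorem apply_mem_radEigenspace {α β : F} (hv : v ∈ radEigenspace ρ φ α β) {p : GL₃ F}
    (hp : p ∈ parabolic) : ρ p v ∈ radEigenspace ρ φ ((α * p 1 1 + β * p 1 2) / p 0 0)
      ((α * p 2 1 + β * p 2 2) / p 0 0) := fun a b ↦ by
  obtain ⟨h₁₀, h₂₀⟩ := mem_parabolic.1 hp
  have h₀₀ : p 0 0 ≠ 0 := fun h0 ↦ p.det_ne_zero <| by
    rw [det_fin_three, h₁₀, h₂₀, h0]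
    ring
  have hmul : toGL (unip a b 0) * p =
      p * toGL (unip ((a * p 1 1 + b * p 2 1) / p 0 0) ((a * p 1 2 + b * p 2 2) / p 0 0) 0) := by
    ext i j
    fin_cases i <;> fin_cases j <;>
      simp [mul_apply, Fin.sum_univ_three, h₁₀, h₂₀, mul_div_cancel₀, h₀₀] <;> ring
  rw [← Module.End.mul_apply, ← map_mul, hmul, map_mul, Module.End.mul_apply, hv, map_smul]
  congr 2
  ring

theorem exists_mem_parabolic_apply_mem_radEigenspace {α β : F} (hαβ : α ≠ 0 ∨ β ≠ 0)
    (hv : v ∈ radEigenspace ρ φ α β) :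
    ∃ p ∈ parabolic, ρ p v ∈ radEigenspace ρ φ 1 0 := by
  obtain ⟨x, y, hxy⟩ : ∃ x y, α * x + β * y ≠ 0 := by
    obtain h | h := hαβ
    exacts [⟨1, 0, by simpa⟩, ⟨0, 1, by simpa⟩]
  let p : GL₃ F := Matrix.GeneralLinearGroup.mkOfDetNeZero
    !![α * x + β * y, 0, 0; 0, x, y; 0, β, -α] (by
      rw [det_fin_three]
      have : (α * x + β * y) ^ 2 ≠ 0 := pow_ne_zero 2 hxy
      contrapose! this
      simp at this
      linear_combination (-1) * this)
  have hp : p ∈ parabolic := mem_parabolic.2 ⟨rfl, rfl⟩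
  refine ⟨p, hp, ?_⟩
  have hp₁ : (α * p 1 1 + β * p 1 2) / p 0 0 = 1 := div_self hxy
  have hp₂ : (α * p 2 1 + β * p 2 2) / p 0 0 = 0 := by
    rw [show α * p 2 1 + β * p 2 2 = α * β + β * -α from rfl]
    ring
  exact hp₁ ▸ hp₂ ▸ apply_mem_radEigenspace hv hp

theorem radEigenspace_le_iSup_map_whittaker [Finite F] (hφ : φ.IsPrimitive) {α : F}
    (h₁ : whittaker ρ (φ.mulShift α) 1 = ⊥) : radEigenspace ρ φ α 0 ≤
      ⨆ t : Fˣ, (whittaker ρ (φ.mulShift α) φ).map (ρ (torus (Pi.mulSingle 2 t))) := by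
  have := Fintype.ofFinite F
  refine le_of_forall_addChar_eigenvector_mem hφ
    ((ρ.comp toGL : Representation ℂ (SL₃ F) V).compAddChar root₂) (fun y v hv ↦ ?_)
    fun c v hv hc ↦ ?_
  · simpa [root₂_apply] using apply_mem_radEigenspace hv (toGL_unip_mem_parabolic 0 0 y)
  · have hvc := mem_whittaker_of_mem_radEigenspace hv (φ' := φ.mulShift c) hc
    obtain rfl | hc0 := eq_or_ne c 0
    · rw [AddChar.mulShift_zero, h₁, Submodule.mem_bot] at hvc
      exact hvc ▸ Submodule.zero_mem _
    · lift c to Fˣ using IsUnit.mk0 c hc0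
      have hφc : (φ.mulShift c).mulShift (c⁻¹ : Fˣ) = φ := by ext; simp
      refine Submodule.mem_iSup_of_mem c ⟨_, hφc ▸ apply_mulSingle_mem_whittaker hvc c⁻¹, ?_⟩
      rw [Pi.mulSingle_inv, map_inv, ρ.self_inv_apply]

variable {h : V →ₗ⋆[ℂ] V →ₗ[ℂ] ℂ}

theorem IsInvariantForm.apply_eq_zero_of_notMem_parabolic [CharP F 2] [Finite F]
    (hh : IsInvariantForm ρ h) (h₁ : whittaker ρ 1 1 = ⊥) {g : GL₃ F} (hg : g ∉ parabolic)
    (hv : v ∈ radEigenspace ρ φ 0 0) (hw : w ∈ radEigenspace ρ φ 0 0) : h v (ρ g w) = 0 := by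
  have := Fintype.ofFinite F
  obtain ⟨p, hp, p', hp', rfl⟩ := exists_mul_s₁_mul_of_notMem_parabolic hg
  set v' := ρ p⁻¹ v with hv'
  set w' := ρ p' w with hw'
  have hv'0 : v' ∈ radEigenspace ρ φ 0 0 := by
    simpa using apply_mem_radEigenspace hv (inv_mem hp)
  have hw'0 : w' ∈ radEigenspace ρ φ 0 0 := by simpa using apply_mem_radEigenspace hw hp'
  have hroot (c : F) : ρ (toGL (root₂ c)) (ρ (toGL s₁) w') = ρ (toGL s₁) w' := by
    rw [← Module.End.mul_apply, ← map_mul, ← map_mul, root₂_apply, ← s₁_mul_unip, map_mul, map_mul,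
      Module.End.mul_apply, hw'0]
    simp
  have hsum : ∑ c, ρ (toGL (root₂ c)) v' = 0 := by
    rw [← Submodule.mem_bot ℂ, ← h₁]
    refine AddChar.mulShift_zero φ ▸
      mem_whittaker_of_mem_radEigenspace (Submodule.sum_mem _ fun c _ ↦ ?_) fun d ↦ ?_
    · simpa [root₂_apply] using apply_mem_radEigenspace hv'0 (toGL_unip_mem_parabolic 0 0 c)
    · rw [map_sum, AddChar.mulShift_zero, AddChar.one_apply, one_smul]
      refine Fintype.sum_equiv (Equiv.addLeft d) _ _ fun c ↦ ?_
      rw [Equiv.coe_addLeft, AddChar.map_add_eq_mul, map_mul, map_mul, Module.End.mul_apply]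
  have hcoeff : h v (ρ (p * toGL s₁ * p') w) = h v' (ρ (toGL s₁) w') := by
    rw [hv', hh.apply_left, hw', inv_inv]
    simp [mul_assoc]
  have hcard : (Fintype.card F : ℂ) * h v' (ρ (toGL s₁) w') = 0 := by
    calc (Fintype.card F : ℂ) * h v' (ρ (toGL s₁) w')
        = ∑ c, h (ρ (toGL (root₂ c)) v') (ρ (toGL (root₂ c)) (ρ (toGL s₁) w')) := by
          simp [hh.apply_apply]
      _ = h (∑ c, ρ (toGL (root₂ c)) v') (ρ (toGL s₁) w') := by
          simp [hroot]
      _ = 0 := by rw [hsum, map_zero, LinearMap.zero_apply]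
  rw [hcoeff]
  exact (mul_eq_zero.1 hcard).resolve_left (Nat.cast_ne_zero.2 Fintype.card_ne_zero)

variable [CharP F 2] [Finite F]

theorem IsInvariantForm.unipChar_mul_apply_unip_finRotate [DecidableEq F]
    (hh : IsInvariantForm ρ h) (h₁ : whittaker ρ 1 1 = ⊥) (hw : w ∈ whittaker ρ 1 φ)
    (u : unipSubgroup (F := F)) :
    (unipChar φ φ u⁻¹ : ℂ) * h (ρ (toGL (permSL (finRotate 3).symm)) w)
        (ρ (toGL (u : SL₃ F)) (ρ (toGL (permSL (finRotate 3).symm)) w)) =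
      if (u : SL₃ F) 0 2 = 0 ∧ (u : SL₃ F) 1 2 = 0 then h w w else 0 := by
  set n : GL₃ F := toGL (permSL (finRotate 3).symm) with hn
  obtain ⟨_, a, b, c, rfl⟩ := u
  split_ifs with hbc
  · obtain ⟨rfl, rfl⟩ : b = 0 ∧ c = 0 := hbc
    have hnw : ρ (toGL (unip a 0 0)) (ρ n w) =
        (unipChar φ φ ⟨unip a 0 0, a, 0, 0, rfl⟩ : ℂ) • ρ n w := by
      rw [← Module.End.mul_apply, ← map_mul, ← map_mul, ← finRotate_symm_mul_unip, map_mul,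
        map_mul, Module.End.mul_apply, mem_whittaker.1 hw, map_smul, unipChar_unip]
      simp [hn]
    rw [hnw, map_smul, hh.apply_apply, map_inv, smul_eq_mul, ← mul_assoc, ← Units.val_mul,
      inv_mul_cancel, Units.val_one, one_mul]
  · have hng : n⁻¹ * toGL (unip a b c) * n ∉ parabolic := fun hmem ↦ hbc <| by
      have hentry := mem_parabolic.1 hmem
      simpa [hn, ← map_inv, mul_apply, Fin.sum_univ_three, permSL_apply] using hentry
    rw [hh.apply_left]
    have := hh.apply_eq_zero_of_notMem_parabolic h₁ hng (φ := φ)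
      (whittaker_le_radEigenspace hw) (whittaker_le_radEigenspace hw)
    simp only [map_mul, Module.End.mul_apply] at this
    rw [this, mul_zero]

variable [FiniteDimensional ℂ V] [ρ.IsIrreducible]

theorem finrank_whittaker_one_le_one (hφ : φ.IsPrimitive) (h₁ : whittaker ρ 1 1 = ⊥) :
    Module.finrank ℂ (whittaker ρ 1 φ) ≤ 1 := by
  classical
  have := Fintype.ofFinite (unipSubgroup (F := F))
  obtain ⟨h, hh⟩ := exists_isInvariantInner ρ
  let n : GL₃ F := toGL (permSL (finRotate 3).symm)
  let e := weightProj (ρ.comp (toGL.comp unipSubgroup.subtype)) (unipChar φ φ)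
  have hinj : Function.Injective (((e ∘ₗ ρ n).domRestrict (whittaker ρ 1 φ)).codRestrict
      (whittaker ρ φ φ) fun _ ↦ weightProj_mem _) := by
    rw [← LinearMap.ker_eq_bot, LinearMap.ker_eq_bot']
    rintro ⟨w, hw⟩ hew
    have he : e (ρ n w) = 0 := congrArg Subtype.val hew
    have h0 : h (ρ n w) (e (ρ n w)) = 0 := by rw [he, map_zero]
    rw [weightProj_apply, map_smul, map_sum] at h0
    simp only [map_smul, smul_eq_mul, MonoidHom.comp_apply, Subgroup.coe_subtype,
      n, hh.unipChar_mul_apply_unip_finRotate h₁ hw,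
      Finset.sum_ite, Finset.sum_const_zero, Finset.sum_const, add_zero, nsmul_eq_mul] at h0
    have hcard : (Finset.univ.filter fun u : unipSubgroup (F := F) ↦
        (u : SL₃ F) 0 2 = 0 ∧ (u : SL₃ F) 1 2 = 0).card ≠ 0 :=
      Finset.card_ne_zero_of_mem (a := 1) (by simp)
    have hww : h w w = 0 := by simpa [hcard] using h0
    exact Subtype.ext (hh.eq_zero_of_apply_self w hww)
  exact (LinearMap.finrank_le_finrank_of_injective hinj).trans (finrank_whittaker_le_one hφ)

theorem odd_finrank_radEigenspace (hφ : φ.IsPrimitive) (h₁ : whittaker ρ 1 1 = ⊥)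
    (hne : whittaker ρ 1 φ ≠ ⊥) : Odd (Module.finrank ℂ (radEigenspace ρ φ 0 0)) := by
  obtain ⟨h, hh⟩ := exists_isInvariantInner ρ
  let z : Fˣ →* GL₃ F := torus.comp (MonoidHom.mulSingle (fun _ : Fin 3 ↦ Fˣ) 2)
  have hsup : ⨆ t, (whittaker ρ 1 φ).map ((ρ.comp z) t) = radEigenspace ρ φ 0 0 := by
    refine le_antisymm (iSup_le fun t ↦ Submodule.map_le_iff_le_comap.2 fun v hv ↦ ?_) ?_
    · simpa [z] using
        apply_mem_radEigenspace (whittaker_le_radEigenspace hv) (torus_mem_parabolic _)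
    · simpa [z] using radEigenspace_le_iSup_map_whittaker hφ (α := 0) (by simpa using h₁)
  have hone : Module.finrank ℂ (whittaker ρ 1 φ) = 1 :=
    le_antisymm (finrank_whittaker_one_le_one hφ h₁) (Submodule.one_le_finrank_iff.2 hne)
  have hodd : Odd (Nat.card Fˣ) := by
    rw [Nat.card_units]
    exact Nat.Even.sub_odd Nat.card_pos even_card_of_charP_two odd_one
  rw [← hsup]
  refine odd_finrank_iSup_map (hh.comp z) (hone ▸ odd_one) (U := ⊥)
    (by rwa [Subgroup.index_bot]) bot_le fun t ht v hv w hw ↦ ?_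
  obtain ⟨c, hc⟩ : ∃ c, φ c ≠ φ.mulShift t c := by
    by_contra! heq
    have h1t : t = 1 := Units.ext (eq_of_forall_apply_mul_eq hφ (by simpa using heq)).symm
    exact ht (h1t ▸ one_mem _)
  exact hh.apply_eq_zero_of_ne (g := toGL (unip 0 0 c)) (mem_whittaker.1 hv 0 0 c)
    (mem_whittaker.1 (apply_mulSingle_mem_whittaker hw t) 0 0 c) (by simpa using hc)

theorem odd_finrank_of_whittaker_one_ne_bot (hφ : φ.IsPrimitive) (h₁ : whittaker ρ 1 1 = ⊥)
    (hne : whittaker ρ 1 φ ≠ ⊥) : Odd (Module.finrank ℂ V) := by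
  obtain ⟨h, hh⟩ := exists_isInvariantInner ρ
  have hP : parabolic ≤ submoduleStabilizer ρ (radEigenspace ρ φ 0 0) := fun p hp v hv ↦ by
    simpa using apply_mem_radEigenspace hv hp
  have hodd := odd_finrank_iSup_map hh (odd_finrank_radEigenspace hφ h₁ hne)
    odd_index_map_unipSubgroup (map_unipSubgroup_le_parabolic.trans hP) fun g hg v hv w hw ↦
      hh.apply_eq_zero_of_notMem_parabolic h₁ (mt (@hP g) hg) hv hw
  rwa [iSup_map_eq_top (ne_bot_of_le_ne_bot hne whittaker_le_radEigenspace), finrank_top] at hodd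

end Radical

section Cuspidal

open Matrix.SpecialLinearGroup

variable {F V : Type*} [Field F] [AddCommGroup V] [Module ℂ V]
  {ρ : Representation ℂ (GL₃ F) V} {φ φ' : AddChar F ℂ}

theorem whittaker_comp_dynkinHom [CharP F 2] :
    whittaker (ρ.comp dynkinHom) φ φ' = whittaker ρ φ' φ := by
  ext v
  simp only [mem_whittaker, MonoidHom.comp_apply, dynkinHom_toGL_unip, CharTwo.neg_eq]
  refine ⟨fun hv a b c ↦ ?_, fun hv a b c ↦ by rw [hv, mul_comm]⟩
  have := hv c (c * a - b) a
  rwa [sub_sub_cancel, mul_comm (φ c)] at this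

theorem radEigenspace_le_iSup_map_parabolic [Finite F] (hφ : φ.IsPrimitive)
    (h₂ : whittaker ρ φ 1 = ⊥) {α β : F} (hαβ : α ≠ 0 ∨ β ≠ 0) : radEigenspace ρ φ α β ≤
      ⨆ p, (whittaker ρ φ φ).map (ρ.comp (parabolic (F := F)).subtype p) := fun v hv ↦ by
  have hle : radEigenspace ρ φ 1 0 ≤
      ⨆ p, (whittaker ρ φ φ).map (ρ.comp (parabolic (F := F)).subtype p) := by
    have hle' := radEigenspace_le_iSup_map_whittaker (ρ := ρ) hφ (α := 1) (by simpa using h₂)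
    rw [AddChar.mulShift_one] at hle'
    exact hle'.trans (iSup_le fun t ↦
      le_iSup (fun p ↦ (whittaker ρ φ φ).map (ρ.comp (parabolic (F := F)).subtype p))
        ⟨_, torus_mem_parabolic (Pi.mulSingle 2 t)⟩)
  obtain ⟨p, hp, hpv⟩ := exists_mem_parabolic_apply_mem_radEigenspace hαβ hv
  rw [← ρ.inv_self_apply p v]
  exact apply_mem_iSup_map (⟨p⁻¹, inv_mem hp⟩ : parabolic) (hle hpv)

theorem iSup_map_whittaker_eq_top [Finite F] (hφ : φ.IsPrimitive) (h₁ : whittaker ρ 1 1 = ⊥)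
    (h₂ : whittaker ρ 1 φ = ⊥) (h₃ : whittaker ρ φ 1 = ⊥) :
    ⨆ p, (whittaker ρ φ φ).map (ρ.comp (parabolic (F := F)).subtype p) = ⊤ := by
  have := Fintype.ofFinite F
  have h₀ : radEigenspace ρ φ 0 0 = ⊥ := by
    have hle := radEigenspace_le_iSup_map_whittaker (ρ := ρ) hφ (α := 0) (by simpa using h₁)
    simpa [h₂] using hle
  let σ : AddChar F (Module.End ℂ V) :=
    (ρ.comp toGL : Representation ℂ (SL₃ F) V).compAddChar root₁
  refine top_le_iff.1 <| le_of_forall_addChar_eigenvector_mem hφ σ (fun _ _ _ ↦ trivial)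
    fun α v _ hα ↦ ?_
  let E : Submodule ℂ V := ⨅ y, LinearMap.ker (σ y - φ (α * y) • 1)
  have hE {v : V} : v ∈ E ↔ ∀ y, σ y v = φ (α * y) • v := by simp [E, sub_eq_zero]
  refine le_of_forall_addChar_eigenvector_mem (S := E) hφ
    ((ρ.comp toGL : Representation ℂ (SL₃ F) V).compAddChar root₁₂) (fun y v hv ↦ hE.2 fun z ↦ ?_)
    (fun β v hv hβ ↦ ?_) (hE.2 hα)
  · have hcomm : σ z * ρ (toGL (root₁₂ y)) = ρ (toGL (root₁₂ y)) * σ z := by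
      change ρ (toGL (unip z 0 0)) * ρ (toGL (unip 0 y 0)) =
        ρ (toGL (unip 0 y 0)) * ρ (toGL (unip z 0 0))
      simp [← map_mul, unip_mul]
    change (σ z * ρ (toGL (root₁₂ y))) v = _ • ρ (toGL (root₁₂ y)) v
    rw [hcomm, Module.End.mul_apply, hE.1 hv, map_smul]
  · have hrad : v ∈ radEigenspace ρ φ α β := fun a b ↦ by
      rw [show unip a b 0 = root₁ a * root₁₂ b by simp [root₁_apply, root₁₂_apply, unip_mul],
        map_mul, map_mul, Module.End.mul_apply]
      change σ a (((ρ.comp toGL : Representation ℂ (SL₃ F) V).compAddChar root₁₂) b v) = _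
      rw [hβ, map_smul, hE.1 hv, smul_smul, ← AddChar.map_add_eq_mul, add_comm]
    obtain hαβ | hαβ := em (α ≠ 0 ∨ β ≠ 0)
    · exact radEigenspace_le_iSup_map_parabolic hφ h₃ hαβ hrad
    · push Not at hαβ
      rw [hαβ.1, hαβ.2, h₀, Submodule.mem_bot] at hrad
      exact hrad ▸ Submodule.zero_mem _

variable [CharP F 2] [Finite F] {h : V →ₗ⋆[ℂ] V →ₗ[ℂ] ℂ}

theorem IsInvariantForm.apply_eq_zero_of_notMem_submoduleStabilizer (hh : IsInvariantForm ρ h)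
    (hφ : φ.IsPrimitive) {p : GL₃ F} (hp : p ∈ parabolic)
    (hps : p ∉ submoduleStabilizer ρ (whittaker ρ φ φ)) {v w : V} (hv : v ∈ whittaker ρ φ φ)
    (hw : w ∈ whittaker ρ φ φ) : h v (ρ p w) = 0 := by
  obtain ⟨h₁₀, h₂₀⟩ := mem_parabolic.1 hp
  obtain ⟨y, π, t, a, b, c, rfl⟩ := exists_bruhat_of_apply_eq_zero h₁₀ h₂₀
  rw [map_mul toGL, mul_assoc, ← mul_assoc _ (torus t)] at hp hps ⊢
  have hunip (a b c : F) : toGL (unip a b c) ∈ submoduleStabilizer ρ (whittaker ρ φ φ) :=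
    fun v hv ↦ mem_whittaker.1 hv a b c ▸ Submodule.smul_mem _ _ hv
  have hπ : π 0 = 0 := toGL_permSL_mem_parabolic.1 <| by
    rwa [parabolic.mul_mem_cancel_left (toGL_unip_mem_parabolic _ _ _),
      parabolic.mul_mem_cancel_right (toGL_unip_mem_parabolic _ _ _),
      parabolic.mul_mem_cancel_right (torus_mem_parabolic _)] at hp
  rw [← mul_assoc, hh.apply_unip_mul_mul_unip hv hw]
  refine mul_eq_zero_of_right _ (by_contra fun hm ↦ hps ?_)
  obtain ⟨rfl, h01, h12⟩ | ⟨rfl, -⟩ | ⟨rfl, -⟩ | rfl := hh.cases_of_apply_ne_zero hφ hv hw hm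
  · refine mul_mem (hunip _ _ _) (mul_mem ?_ (hunip _ _ _))
    intro v hv
    simpa [h01, h12] using apply_torus_mem_whittaker hv t
  all_goals simp at hπ

variable [FiniteDimensional ℂ V] [ρ.IsIrreducible]

theorem odd_finrank_of_whittaker_eq_bot (hφ : φ.IsPrimitive) (h₁ : whittaker ρ 1 1 = ⊥)
    (h₂ : whittaker ρ 1 φ = ⊥) (h₃ : whittaker ρ φ 1 = ⊥) : Odd (Module.finrank ℂ V) := by
  obtain ⟨h, hh⟩ := exists_isInvariantInner ρ
  have hsup := iSup_map_whittaker_eq_top hφ h₁ h₂ h₃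
  have hone : Module.finrank ℂ (whittaker ρ φ φ) = 1 := by
    refine le_antisymm (finrank_whittaker_le_one hφ) (Submodule.one_le_finrank_iff.2 fun h0 ↦ ?_)
    have := nontrivial_of_isIrreducible ρ
    simp [h0] at hsup
  have hindex : Odd ((unipSubgroup.map toGL).subgroupOf (parabolic (F := F))).index :=
    odd_index_map_unipSubgroup.of_dvd_nat
      ⟨_, (Subgroup.relIndex_mul_index map_unipSubgroup_le_parabolic).symm⟩
  have hodd := odd_finrank_iSup_map (hh.comp (parabolic (F := F)).subtype) (hone ▸ odd_one) hindex
    ?_ fun p hp v hv w hw ↦ hh.apply_eq_zero_of_notMem_submoduleStabilizer hφ p.2 hp hv hw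
  · rwa [hsup, finrank_top] at hodd
  · rintro ⟨_, hp⟩ ⟨_, ⟨a, b, c, rfl⟩, rfl⟩ v hv
    exact mem_whittaker.1 hv a b c ▸ Submodule.smul_mem _ _ hv

theorem whittaker_one_one_ne_bot (heven : Even (Module.finrank ℂ V)) : whittaker ρ 1 1 ≠ ⊥ := by
  have := Fintype.ofFinite F
  rw [← Nat.not_odd_iff_even] at heven
  obtain ⟨φ, hφ⟩ : ∃ φ : AddChar F ℂ, φ.IsPrimitive :=
    ⟨_, AddChar.FiniteField.primitiveChar_to_Complex_isPrimitive F⟩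
  intro h₁
  by_cases h₂ : whittaker ρ 1 φ = ⊥
  · by_cases h₃ : whittaker ρ φ 1 = ⊥
    · exact heven (odd_finrank_of_whittaker_eq_bot hφ h₁ h₂ h₃)
    · have := isIrreducible_comp_of_surjective (ρ := ρ) dynkinHom_surjective
      refine heven (odd_finrank_of_whittaker_one_ne_bot (ρ := ρ.comp dynkinHom) hφ ?_ ?_)
      · rwa [whittaker_comp_dynkinHom]
      · rwa [whittaker_comp_dynkinHom]
  · exact heven (odd_finrank_of_whittaker_one_ne_bot hφ h₁ h₂)

end Cuspidal

section HighestWeight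

open Matrix.SpecialLinearGroup

variable {F V : Type*} [Field F] [AddCommGroup V] [Module ℂ V]
  {ρ : Representation ℂ (GL₃ F) V} {l : Fin 3 → Fˣ →* ℂˣ} {v w : V}

/-- The vectors fixed by the upper unitriangular matrices on which the diagonal matrices act
through the characters `l 0`, `l 1`, `l 2` of their entries. -/
def highestWeightSpace (ρ : Representation ℂ (GL₃ F) V) (l : Fin 3 → Fˣ →* ℂˣ) :
    Submodule ℂ V :=
  whittaker ρ 1 1 ⊓ ⨅ t, LinearMap.ker (ρ (torus t) - (∏ i, (l i (t i) : ℂ)) • 1)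

theorem mem_highestWeightSpace : w ∈ highestWeightSpace ρ l ↔
    (∀ a b c, ρ (toGL (unip a b c)) w = w) ∧
      ∀ t, ρ (torus t) w = (∏ i, (l i (t i) : ℂ)) • w := by
  simp [highestWeightSpace, mem_whittaker, sub_eq_zero]

theorem exists_mem_highestWeightSpace [FiniteDimensional ℂ V]
    (h₁ : whittaker ρ 1 1 ≠ ⊥) : ∃ l, ∃ w ∈ highestWeightSpace ρ l, w ≠ 0 := by
  obtain ⟨w, hw, hw0, l, hl⟩ := exists_weight_vector (ρ.comp torus) h₁ fun t v hv ↦ by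
    have hone (a : F) : AddChar.mulShift (1 : AddChar F ℂ) a = 1 := by ext; simp
    simpa only [MonoidHom.comp_apply, hone] using apply_torus_mem_whittaker hv t
  refine ⟨fun i ↦ l.comp (MonoidHom.mulSingle (fun _ ↦ Fˣ) i), w,
    mem_highestWeightSpace.2 ⟨fun a b c ↦ by simpa using mem_whittaker.1 hw a b c, fun t ↦ ?_⟩, hw0⟩
  rw [← MonoidHom.comp_apply, hl]
  simp [← Units.coe_prod, ← map_prod, Finset.univ_prod_mulSingle]

variable [CharP F 2]

theorem IsInvariantForm.apply_permSL_eq_zero [Finite F] {h : V →ₗ⋆[ℂ] V →ₗ[ℂ] ℂ}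
    (hh : IsInvariantForm ρ h) (hv : v ∈ highestWeightSpace ρ l)
    (hw : w ∈ highestWeightSpace ρ l) {π : Equiv.Perm (Fin 3)} {i : Fin 3} (hi : l (π i) ≠ l i) :
    h v (ρ (toGL (permSL π)) w) = 0 := by
  obtain ⟨x, hx⟩ : ∃ x, l (π i) x ≠ l i x := by
    by_contra! heq
    exact hi (MonoidHom.ext heq)
  have htorus (j : Fin 3) {v : V} (hv : v ∈ highestWeightSpace ρ l) :
      ρ (torus (Pi.mulSingle j x)) v = (l j x : ℂ) • v := by
    rw [(mem_highestWeightSpace.1 hv).2, Finset.prod_eq_single j] <;> simp +contextual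
  have hcomp : Pi.mulSingle (π i) x ∘ π = Pi.mulSingle i x := by
    ext j
    simp [Pi.mulSingle_apply]
  refine hh.apply_eq_zero_of_ne (htorus (π i) hv) (?_ : _ = (l i x : ℂ) • _)
    (mt Units.ext hx)
  rw [← Module.End.mul_apply, ← map_mul, torus_mul_permSL, hcomp, map_mul,
    Module.End.mul_apply, htorus i hw, map_smul]

theorem odd_finrank_of_mem_highestWeightSpace [Finite F] [FiniteDimensional ℂ V]
    [ρ.IsIrreducible] (hw : w ∈ highestWeightSpace ρ l) (hw0 : w ≠ 0)
    (hl : ∀ π : Equiv.Perm (Fin 3), (∀ i, l (π i) = l i) → ρ (toGL (permSL π)) w = w) :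
    Odd (Module.finrank ℂ V) := by
  obtain ⟨h, hh⟩ := exists_isInvariantInner ρ
  obtain ⟨hunip, htorus⟩ := mem_highestWeightSpace.1 hw
  let S := Submodule.span ℂ {w}
  have hstab {g : GL₃ F} {a : ℂ} (hg : ρ g w = a • w) : g ∈ submoduleStabilizer ρ S := fun v hv ↦ by
    obtain ⟨b, rfl⟩ := Submodule.mem_span_singleton.1 hv
    rw [map_smul, hg]
    exact Submodule.smul_mem _ _ (Submodule.smul_mem _ _ (Submodule.mem_span_singleton_self w))
  have hUS : unipSubgroup.map toGL ≤ submoduleStabilizer ρ S := by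
    rintro _ ⟨_, ⟨a, b, c, rfl⟩, rfl⟩
    exact hstab (a := 1) (by rw [hunip, one_smul])
  have hodd := odd_finrank_iSup_map hh (S := S) (by rw [finrank_span_singleton hw0]; exact odd_one)
    odd_index_map_unipSubgroup hUS fun g hg v hv v' hv' ↦ ?_
  · rwa [iSup_map_eq_top (mt Submodule.span_singleton_eq_bot.1 hw0), finrank_top] at hodd
  · obtain ⟨a, rfl⟩ := Submodule.mem_span_singleton.1 hv
    obtain ⟨a', rfl⟩ := Submodule.mem_span_singleton.1 hv'
    obtain ⟨x, y, z, π, t, x', y', z', rfl⟩ := exists_bruhat g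
    have hcoef : ρ (toGL (unip x y z * permSL π) * (torus t * toGL (unip x' y' z'))) w =
        (∏ i, (l i (t i) : ℂ)) • ρ (toGL (unip x y z)) (ρ (toGL (permSL π)) w) := by
      simp only [map_mul, Module.End.mul_apply, hunip, htorus, map_smul]
    by_cases hπ : ∀ i, l (π i) = l i
    · rw [hl π hπ, hunip] at hcoef
      exact (hg (hstab hcoef)).elim
    · push Not at hπ
      obtain ⟨i, hi⟩ := hπ
      rw [map_smulₛₗ, LinearMap.smul_apply, map_smul, map_smul, hcoef, map_smul,
        hh.apply_right_of_eq_self (hunip _ _ _),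
        hh.apply_permSL_eq_zero hw hw hi]
      simp

section Hecke

variable [Fintype F]

theorem heckeOp_mem_highestWeightSpace (hw : w ∈ highestWeightSpace ρ l) {x : AddChar F (SL₃ F)}
    {π : Equiv.Perm (Fin 3)}
    (hunip : ∀ a b c, ∃ d, ∀ t, ∃ a' b' c',
      unip a b c * (x t * permSL π) = x (d + t) * permSL π * unip a' b' c')
    (htorus : ∀ t, ∃ d : Fˣ, ∀ y, torus t * toGL (x y) = toGL (x (d * y)) * torus t) :
    heckeOp (ρ.comp toGL) x (permSL π) w ∈ highestWeightSpace ρ (l ∘ π.symm) := by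
  obtain ⟨hunip_w, htorus_w⟩ := mem_highestWeightSpace.1 hw
  refine mem_highestWeightSpace.2 ⟨fun a b c ↦ ?_, fun t ↦ ?_⟩
  · obtain ⟨d, hd⟩ := hunip a b c
    choose a' b' c' hd using hd
    simpa using apply_heckeOp_of_forall_mul (ρ := ρ.comp toGL) (a := 1) (Equiv.addLeft d) hd
      (by simp [hunip_w])
  · obtain ⟨d, hd⟩ := htorus t
    rw [heckeOp_apply, map_sum, Finset.smul_sum]
    refine Fintype.sum_equiv (Units.mulLeft d) _ _ fun y ↦ ?_
    rw [Units.mulLeft_apply, MonoidHom.comp_apply, MonoidHom.comp_apply, ← Module.End.mul_apply,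
      ← map_mul, map_mul toGL, ← mul_assoc, hd, mul_assoc, torus_mul_permSL, ← mul_assoc, ← map_mul,
      map_mul, Module.End.mul_apply, htorus_w, map_smul]
    congr 1
    exact Fintype.prod_equiv π _ _ fun i ↦ by simp

theorem heckeOp_root₂_mem_highestWeightSpace (hw : w ∈ highestWeightSpace ρ l) :
    heckeOp (ρ.comp toGL) root₂ s₂ w ∈ highestWeightSpace ρ (l ∘ Equiv.swap 1 2) := by
  rw [← Equiv.symm_swap]
  refine heckeOp_mem_highestWeightSpace hw
    (fun a b c ↦ ⟨c, fun t ↦ ⟨_, _, _, mul_root₂_mul_s₂ a b c t⟩⟩)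
    fun t ↦ ⟨t 1 / t 2, fun y ↦ ?_⟩
  simp [root₂_apply, torus_mul_unip, mul_div_right_comm]

theorem heckeOp_root₁_mem_highestWeightSpace (hw : w ∈ highestWeightSpace ρ l) :
    heckeOp (ρ.comp toGL) root₁ s₁ w ∈ highestWeightSpace ρ (l ∘ Equiv.swap 0 1) := by
  rw [← Equiv.symm_swap]
  refine heckeOp_mem_highestWeightSpace hw
    (fun a b c ↦ ⟨a, fun t ↦ ⟨_, _, _, mul_root₁_mul_s₁ a b c t⟩⟩)
    fun t ↦ ⟨t 0 / t 1, fun y ↦ ?_⟩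
  simp [root₁_apply, torus_mul_unip, mul_div_right_comm]

theorem heckeOp_root₂_ne_zero (hw : w ∈ highestWeightSpace ρ l) (hw0 : w ≠ 0)
    (hl : l 1 ≠ l 2) : heckeOp (ρ.comp toGL) root₂ s₂ w ≠ 0 := by
  obtain ⟨hunip, htorus⟩ := mem_highestWeightSpace.1 hw
  refine heckeOp_ne_zero_of_ne_one isRankOne_root₂ (fun t ↦ hunip 0 0 t) (div_ne_one.2 hl)
    (fun t ↦ ?_) hw0
  rw [MonoidHom.comp_apply, toGL_torusSL, htorus]
  simp [Fin.prod_univ_three, div_eq_mul_inv]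

theorem heckeOp_root₁_ne_zero (hw : w ∈ highestWeightSpace ρ l) (hw0 : w ≠ 0)
    (hl : l 0 ≠ l 1) : heckeOp (ρ.comp toGL) root₁ s₁ w ≠ 0 := by
  obtain ⟨hunip, htorus⟩ := mem_highestWeightSpace.1 hw
  refine heckeOp_ne_zero_of_ne_one isRankOne_root₁ (fun t ↦ hunip t 0 0) (div_ne_one.2 hl)
    (fun t ↦ ?_) hw0
  rw [MonoidHom.comp_apply, toGL_torusSL, htorus]
  simp [Fin.prod_univ_three, div_eq_mul_inv]

end Hecke

variable [FiniteDimensional ℂ V] [ρ.IsIrreducible]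

theorem exists_mem_highestWeightSpace_apply_one_eq [Finite F]
    (hodd : ¬ Odd (Module.finrank ℂ V)) (hw : w ∈ highestWeightSpace ρ l) (hw0 : w ≠ 0) :
    ∃ l', l' 1 = l' 2 ∧ ∃ w' ∈ highestWeightSpace ρ l', w' ≠ 0 := by
  have := Fintype.ofFinite F
  obtain h12 | h12 := eq_or_ne (l 1) (l 2)
  · exact ⟨l, h12, w, hw, hw0⟩
  have of_eq_two {l : Fin 3 → Fˣ →* ℂˣ} {w : V} (hw : w ∈ highestWeightSpace ρ l) (hw0 : w ≠ 0)
      (h01 : l 0 ≠ l 1) (h02 : l 0 = l 2) : ∃ l', l' 1 = l' 2 ∧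
      ∃ w' ∈ highestWeightSpace ρ l', w' ≠ 0 :=
    ⟨_, h02, _, heckeOp_root₁_mem_highestWeightSpace hw, heckeOp_root₁_ne_zero hw hw0 h01⟩
  obtain h02 | h02 := eq_or_ne (l 0) (l 2)
  · exact of_eq_two hw hw0 (h02 ▸ h12.symm) h02
  obtain h01 | h01 := eq_or_ne (l 0) (l 1)
  · exact of_eq_two (heckeOp_root₂_mem_highestWeightSpace hw) (heckeOp_root₂_ne_zero hw hw0 h12)
      h02 h01
  refine (hodd (odd_finrank_of_mem_highestWeightSpace hw hw0 fun π hπ ↦ ?_)).elim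
  have hinj : Function.Injective l := by
    intro i j
    fin_cases i <;> fin_cases j <;> simp [h01, h02, h12, h01.symm, h02.symm, h12.symm]
  rw [show π = 1 from Equiv.ext fun i ↦ hinj (hπ i)]
  simp

theorem exists_mem_highestWeightSpace_of_even [Fintype F] (heven : Even (Module.finrank ℂ V)) :
    ∃ l, l 1 = l 2 ∧ ∃ w ∈ highestWeightSpace ρ l, w ≠ 0 ∧
      (l 0 = l 1 ∨ heckeOp (ρ.comp toGL) root₂ s₂ w = -w) := by
  rw [← Nat.not_odd_iff_even] at heven
  obtain ⟨l, w, hw, hw0⟩ :=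
    exists_mem_highestWeightSpace (whittaker_one_one_ne_bot (ρ := ρ) (Nat.not_odd_iff_even.1 heven))
  obtain ⟨l, h12, w, hw, hw0⟩ := exists_mem_highestWeightSpace_apply_one_eq heven hw hw0
  refine ⟨l, h12, w, hw, hw0, or_iff_not_imp_left.2 fun h01 ↦ ?_⟩
  by_contra hT
  have hl : l ∘ Equiv.swap 1 2 = l := by
    ext1 i
    fin_cases i <;> simp [h12, Equiv.swap_apply_of_ne_of_ne]
  have hw' := add_mem hw (hl ▸ heckeOp_root₂_mem_highestWeightSpace hw)
  refine heven (odd_finrank_of_mem_highestWeightSpace hw' (fun h0 ↦ hT ?_) fun π hπ ↦ ?_)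
  · exact eq_neg_of_add_eq_zero_right h0
  obtain ⟨hunip, htorus⟩ := mem_highestWeightSpace.1 hw
  have hs₂ := apply_add_heckeOp (ρ := ρ.comp toGL) isRankOne_root₂ (fun t ↦ hunip 0 0 t) fun t ↦ by
    rw [MonoidHom.comp_apply, toGL_torusSL, htorus]
    simp [Fin.prod_univ_three, h12]
  have hπ0 : π 0 = 0 := by
    by_contra hne
    exact h01 ((hπ 0).symm.trans (by generalize π 0 = i at *; fin_cases i <;> simp_all))
  obtain rfl | rfl : π = 1 ∨ π = Equiv.swap 1 2 := by
    clear * - hπ0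
    revert π
    decide
  · simp
  · exact hs₂

end HighestWeight

section SpecialLinear

open Matrix.SpecialLinearGroup

variable {F V : Type*} [Field F]

theorem range_toGL_eq_ker_det :
    (toGL (n := Fin 3) (R := F)).range = Matrix.GeneralLinearGroup.det.ker := by
  ext g
  refine ⟨?_, fun hg ↦ ⟨⟨g, congrArg Units.val hg⟩, Units.ext rfl⟩⟩
  rintro ⟨s, rfl⟩
  exact Units.ext s.det_coe

theorem exists_eq_toGL_mul_torus (g : GL₃ F) :
    ∃ (s : SL₃ F) (t : Fin 3 → Fˣ), g = toGL s * torus t := by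
  let t : Fin 3 → Fˣ := Pi.mulSingle 0 (Matrix.GeneralLinearGroup.det g)
  have ht : Matrix.GeneralLinearGroup.det (torus t) = Matrix.GeneralLinearGroup.det g := by
    ext
    simp [t, det_diagonal, Fin.prod_univ_three]
  have hmem : g * (torus t)⁻¹ ∈ Matrix.GeneralLinearGroup.det.ker := by
    rw [MonoidHom.mem_ker, map_mul, map_inv, ht, mul_inv_cancel]
  rw [← range_toGL_eq_ker_det] at hmem
  obtain ⟨s, hs⟩ := hmem
  exact ⟨s, t, mul_inv_eq_iff_eq_mul.1 hs.symm⟩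

theorem exists_bruhat_specialLinear [CharP F 2] (g : SL₃ F) : ∃ (a b c : F) (π : Equiv.Perm (Fin 3))
    (x y : Fˣ) (a' b' c' : F), g = unip a b c * permSL π * (torusSL x y * unip a' b' c') := by
  obtain ⟨a, b, c, π, t, a', b', c', hg⟩ := exists_bruhat (toGL g)
  have ht : t 0 * t 1 * t 2 = 1 := by
    have hdet := congrArg Matrix.GeneralLinearGroup.det hg
    have hSL (s : SL₃ F) : Matrix.GeneralLinearGroup.det (toGL s) = 1 := Units.ext s.det_coe
    simp only [map_mul _ (toGL _), map_mul _ (torus t), hSL, one_mul, mul_one] at hdet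
    ext
    simpa [det_diagonal, Fin.prod_univ_three] using (congrArg Units.val hdet).symm
  have htorus : torus t = toGL (torusSL (t 1) (t 2)) := by
    rw [toGL_torusSL, inv_eq_of_mul_eq_one_left ((mul_assoc _ _ _).symm.trans ht)]
    congr 1
    ext i
    fin_cases i <;> rfl
  exact ⟨a, b, c, π, t 1, t 2, a', b', c', toGL_injective <| by
    rw [hg, htorus, ← map_mul, ← map_mul]⟩

variable [AddCommGroup V] [Module ℂ V] {ρ : Representation ℂ (SL₃ F) V} {ν : Fˣ →* ℂˣ} {w : V}

/-- A nonzero vector fixed by the upper unitriangular matrices on which a diagonal matrix acts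
through the character `ν⁻¹` of its first entry. -/
structure IsHighestWeightVector (ρ : Representation ℂ (SL₃ F) V) (ν : Fˣ →* ℂˣ) (w : V) :
    Prop where
  ne_zero : w ≠ 0
  apply_unip : ∀ a b c, ρ (unip a b c) w = w
  apply_torusSL : ∀ x y, ρ (torusSL x y) w = (ν (x * y) : ℂ) • w

theorem isHighestWeightVector_of_equivariant {W : Type*} [AddCommGroup W] [Module ℂ W]
    {σ : Representation ℂ (GL₃ F) W} [σ.IsIrreducible] {e : W →ₗ[ℂ] V}
    (he : ∀ s w, e (σ (toGL s) w) = ρ s (e w)) (he0 : e ≠ 0) {l : Fin 3 → Fˣ →* ℂˣ} {w : W}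
    (hw : w ∈ highestWeightSpace σ l) (hw0 : w ≠ 0) (h12 : l 1 = l 2) :
    IsHighestWeightVector ρ (l 1 / l 0) (e w) := by
  obtain ⟨hunip, htorus⟩ := mem_highestWeightSpace.1 hw
  refine ⟨fun h0 ↦ he0 ?_, fun a b c ↦ by rw [← he, hunip], fun x y ↦ ?_⟩
  · refine LinearMap.ext_on (span_range_apply_eq_top (ρ := σ) hw0) ?_
    rintro _ ⟨g, rfl⟩
    obtain ⟨s, t, rfl⟩ := exists_eq_toGL_mul_torus g
    simp [htorus, he, h0]
  · rw [← he, toGL_torusSL, htorus, map_smul]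
    simp [Fin.prod_univ_three, h12, div_eq_mul_inv]
    ring_nf

theorem exists_isHighestWeightVector_of_even [CharP F 2] [Fintype F] [FiniteDimensional ℂ V]
    [ρ.IsIrreducible] (heven : Even (Module.finrank ℂ V)) : ∃ ν w, IsHighestWeightVector ρ ν w ∧
      (ν = 1 ∨ heckeOp ρ root₂ s₂ w = -w) := by
  have := nontrivial_of_isIrreducible ρ
  obtain ⟨σ, e, hσ, he0, he⟩ := exists_isIrreducible_equivariant toGL_injective ρ
  have hnormal : (toGL (n := Fin 3) (R := F)).range.Normal :=
    range_toGL_eq_ker_det (F := F) ▸ inferInstance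
  have hdvd : Module.finrank ℂ V ∣ Module.finrank ℂ σ.toSubmodule :=
    finrank_dvd_finrank_of_equivariant (W := σ.toSubmodule) hnormal he he0
  obtain ⟨l, h12, w, hw, hw0, hT⟩ := exists_mem_highestWeightSpace_of_even
    (V := σ.toSubmodule) (ρ := σ.toRepresentation) (heven.trans_dvd hdvd)
  refine ⟨l 1 / l 0, e w, isHighestWeightVector_of_equivariant he he0 hw hw0 h12,
    hT.imp (fun h01 ↦ div_eq_one.2 h01.symm) fun hT ↦ ?_⟩
  rw [← map_neg, ← hT, heckeOp_apply, heckeOp_apply, map_sum]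
  simp only [MonoidHom.comp_apply, he]

end SpecialLinear

section Real

open Matrix.SpecialLinearGroup

variable {F V : Type*} [Field F] [AddCommGroup V] [Module ℂ V]
  {ρ : Representation ℂ (SL₃ F) V} {ν : Fˣ →* ℂˣ} {w : V}
  {h : V →ₗ⋆[ℂ] V →ₗ[ℂ] ℂ}

theorem IsHighestWeightVector.apply_apply_unip (hw : IsHighestWeightVector ρ ν w)
    (hh : IsInvariantForm ρ h) (a b c : F) (v : V) : h w (ρ (unip a b c) v) = h w v :=
  hh.apply_right_of_eq_self (hw.apply_unip a b c) v

variable [CharP F 2]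

theorem IsHighestWeightVector.conj_apply_permSL (hw : IsHighestWeightVector ρ 1 w)
    (hh : IsInvariantForm ρ h)
    (hreal : starRingEnd ℂ (h w (ρ (s₂ * s₁) w)) = h w (ρ (s₂ * s₁) w)) (g : SL₃ F) :
    starRingEnd ℂ (h w (ρ g w)) = h w (ρ g w) := by
  obtain ⟨a, b, c, π, x, y, a', b', c', rfl⟩ := exists_bruhat_specialLinear g
  have hcoef : h w (ρ (unip a b c * permSL π * (torusSL x y * unip a' b' c')) w) =
      h w (ρ (permSL π) w) := by
    simp [hw.apply_unip, hw.apply_torusSL, hw.apply_apply_unip hh]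
  have hinv (g : SL₃ F) : starRingEnd ℂ (h w (ρ g w)) = h w (ρ g⁻¹ w) := by
    rw [hh.conj_apply, hh.apply_left]
  have hperm : ∀ π : Equiv.Perm (Fin 3), π⁻¹ = π ∨ π = Equiv.swap 1 2 * Equiv.swap 0 1 ∨
      π⁻¹ = Equiv.swap 1 2 * Equiv.swap 0 1 := by decide
  rw [hcoef]
  obtain hπ | rfl | hπ := hperm π
  · rw [hinv, ← map_inv, hπ]
  · rw [map_mul, hreal]
  · rw [hinv, ← map_inv, hπ, map_mul, ← hreal, hinv, ← map_mul, ← map_inv, ← hπ, inv_inv]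

section Hecke

variable [Fintype F]

theorem IsHighestWeightVector.add_heckeOp_root₂ (hw : IsHighestWeightVector ρ 1 w)
    (hne : heckeOp ρ root₂ s₂ w ≠ -w) :
    IsHighestWeightVector ρ 1 (w + heckeOp ρ root₂ s₂ w) where
  ne_zero h0 := hne (eq_neg_of_add_eq_zero_right h0)
  apply_unip a b c := by
    rw [map_add, hw.apply_unip, apply_heckeOp_of_forall_mul (a := 1) (Equiv.addLeft c)
      (mul_root₂_mul_s₂ a b c) fun t ↦ by rw [hw.apply_unip, one_smul], one_smul]
  apply_torusSL x y := by
    rw [map_add, hw.apply_torusSL, apply_heckeOp_of_forall_mul (a := 1)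
      (y' := fun _ ↦ torusSL y x) (Units.mulLeft (x / y)) ?_ ?_]
    · simp
    · intro t
      ext i j
      fin_cases i <;> fin_cases j <;> simp [coe_s₂, root₂_apply, mul_comm]
      field_simp
    · simp [hw.apply_torusSL]

theorem IsHighestWeightVector.add_heckeOp_root₁ (hw : IsHighestWeightVector ρ 1 w)
    (hne : heckeOp ρ root₁ s₁ w ≠ -w) :
    IsHighestWeightVector ρ 1 (w + heckeOp ρ root₁ s₁ w) where
  ne_zero h0 := hne (eq_neg_of_add_eq_zero_right h0)
  apply_unip a b c := by
    rw [map_add, hw.apply_unip, apply_heckeOp_of_forall_mul (a := 1) (Equiv.addLeft a)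
      (mul_root₁_mul_s₁ a b c) fun t ↦ by rw [hw.apply_unip, one_smul], one_smul]
  apply_torusSL x y := by
    rw [map_add, hw.apply_torusSL, apply_heckeOp_of_forall_mul (a := 1)
      (y' := fun _ ↦ torusSL (x * y)⁻¹ y) (Units.mulLeft (x * y * x)⁻¹) ?_ ?_]
    · simp
    · intro t
      ext i j
      fin_cases i <;> fin_cases j <;> simp [coe_s₁, root₁_apply]
      field_simp
    · simp [hw.apply_torusSL]

theorem conj_apply_mul_of_heckeOp_eq_neg (hw : IsHighestWeightVector ρ 1 w)
    (hh : IsInvariantForm ρ h) (h₁ : heckeOp ρ root₁ s₁ w = -w) (h₂ : heckeOp ρ root₂ s₂ w = -w) :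
    starRingEnd ℂ (h w (ρ (s₂ * s₁) w)) = h w (ρ (s₂ * s₁) w) := by
  have hterm (x y : F) : h w (ρ (root₂ x * s₂ * (root₁ y * s₁)) w) = h w (ρ (s₂ * s₁) w) := by
    have hs : root₂ x * s₂ * (root₁ y * s₁) = unip 0 y x * (s₂ * s₁) := by
      rw [root₁_apply, root₂_apply, ← mul_assoc, mul_assoc _ s₂, s₂_mul_unip, ← mul_assoc,
        unip_mul, mul_assoc]
      simp
    rw [hs, map_mul, Module.End.mul_apply, hw.apply_apply_unip hh]
  have hsum : (Fintype.card F : ℂ) * ((Fintype.card F : ℂ) * h w (ρ (s₂ * s₁) w)) = h w w := by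
    have key : h w (heckeOp ρ root₂ s₂ (heckeOp ρ root₁ s₁ w)) = h w w := by
      rw [h₁, map_neg, h₂, neg_neg]
    rw [heckeOp_apply, heckeOp_apply] at key
    simpa only [map_sum, ← Module.End.mul_apply, ← map_mul, hterm, Finset.sum_const,
      Finset.card_univ, nsmul_eq_mul] using key
  have hq : (Fintype.card F : ℂ) ≠ 0 := Nat.cast_ne_zero.2 Fintype.card_ne_zero
  have hconj := congrArg (starRingEnd ℂ) hsum
  rw [hh.conj_apply, ← hsum] at hconj
  simpa [hq] using hconj

end Hecke

theorem IsHighestWeightVector.conj_character_eq_self [Finite F] [FiniteDimensional ℂ V]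
    [ρ.IsIrreducible] (hw : IsHighestWeightVector ρ 1 w) (g : SL₃ F) :
    starRingEnd ℂ (ρ.character g) = ρ.character g := by
  have := Fintype.ofFinite F
  obtain ⟨h, hh⟩ := exists_isInvariantInner ρ
  have of_real {w : V} (hw : IsHighestWeightVector ρ 1 w)
      (hreal : starRingEnd ℂ (h w (ρ (s₂ * s₁) w)) = h w (ρ (s₂ * s₁) w)) :
      starRingEnd ℂ (ρ.character g) = ρ.character g :=
    conj_character_eq_self_of_apply_self_ne_zero hh.toIsInvariantForm
      (mt (hh.eq_zero_of_apply_self w) hw.ne_zero)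
      (hw.conj_apply_permSL hh.toIsInvariantForm hreal) g
  have hinv {s : SL₃ F} (hs : s * s = 1) (w : V) : starRingEnd ℂ (h w (ρ s w)) = h w (ρ s w) := by
    rw [hh.conj_apply, hh.apply_left, inv_eq_of_mul_eq_one_left hs]
  obtain h₂ | h₂ := ne_or_eq (heckeOp ρ root₂ s₂ w) (-w)
  · have hs₂ := apply_add_heckeOp (ρ := ρ) isRankOne_root₂ (fun t ↦ hw.apply_unip 0 0 t)
      (w := w) fun t ↦ by simp [hw.apply_torusSL]
    refine of_real (hw.add_heckeOp_root₂ h₂) ?_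
    rw [map_mul, Module.End.mul_apply, hh.apply_right_of_eq_self hs₂]
    exact hinv isRankOne_root₁.mul_self _
  obtain h₁ | h₁ := ne_or_eq (heckeOp ρ root₁ s₁ w) (-w)
  · have hs₁ := apply_add_heckeOp (ρ := ρ) isRankOne_root₁ (fun t ↦ hw.apply_unip t 0 0)
      (w := w) fun t ↦ by simp [hw.apply_torusSL]
    refine of_real (hw.add_heckeOp_root₁ h₁) ?_
    rw [map_mul, Module.End.mul_apply, hs₁]
    exact hinv isRankOne_root₂.mul_self _
  exact of_real hw (conj_apply_mul_of_heckeOp_eq_neg hw hh.toIsInvariantForm h₁ h₂)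

end Real

section Gram

theorem det_ite_card_neg_one {ι K : Type*} [Fintype ι] [DecidableEq ι] [Field K] [CharZero K] :
    det (of fun i j : ι ↦ if i = j then (Fintype.card ι : K) else -1) =
      ((Fintype.card ι : K) + 1) ^ (Fintype.card ι - 1) := by
  have hq : (Fintype.card ι : K) + 1 ≠ 0 := Nat.cast_add_one_ne_zero _
  have hrank : (of fun i j : ι ↦ if i = j then (Fintype.card ι : K) else -1) =
      ((Fintype.card ι : K) + 1) • ((1 : Matrix ι ι K) +
        replicateCol Unit (fun _ : ι ↦ -((Fintype.card ι : K) + 1)⁻¹) *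
          replicateRow Unit (1 : ι → K)) := by
    ext i j
    obtain rfl | hij := eq_or_ne i j
    · simp [mul_apply, mul_add, hq]
    · simp [mul_apply, hij, hq]
  rw [hrank, det_smul, det_one_add_replicateCol_mul_replicateRow]
  cases h : Fintype.card ι with
  | zero => simp [dotProduct, h]
  | succ n =>
    rw [h] at hq
    simp [dotProduct, h, pow_succ] at hq ⊢
    field_simp
    ring

variable {G V ι : Type*} [Group G] [AddCommGroup V] [Module ℂ V] {ρ : Representation ℂ G V}
  {h : V →ₗ⋆[ℂ] V →ₗ[ℂ] ℂ} {P : Subgroup G} {f : ι → V}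

theorem linearIndependent_of_det_ne_zero [Fintype ι] [DecidableEq ι]
    (hf : det (of fun i j ↦ h (f i) (f j)) ≠ 0) : LinearIndependent ℂ f := by
  refine Fintype.linearIndependent_iff.2 fun c hc ↦
    congrFun (eq_zero_of_mulVec_eq_zero hf (v := c) (funext fun i ↦ ?_))
  calc ∑ j, h (f i) (f j) * c j = h (f i) (∑ j, c j • f j) := by simp [mul_comm]
    _ = 0 := by rw [hc, map_zero]

/-- The translates of a family of vectors by representatives of the cosets of `P`, which form a
basis of `V` if `V` is induced from the span of the family. -/
def translates (ρ : Representation ℂ G V) (P : Subgroup G) (f : ι → V) (i : (G ⧸ P) × ι) : V :=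
  ρ i.1.out (f i.2)

theorem apply_translates [DecidableEq (G ⧸ P)] (hh : IsInvariantForm ρ h)
    (hP : ∀ g ∉ P, ∀ a b, h (f a) (ρ g (f b)) = 0) (i j : (G ⧸ P) × ι) :
    h (translates ρ P f i) (translates ρ P f j) =
      if i.1 = j.1 then h (f i.2) (f j.2) else 0 := by
  obtain ⟨x, a⟩ := i
  obtain ⟨y, b⟩ := j
  split_ifs with hxy
  · obtain rfl : x = y := hxy
    exact hh.apply_apply _ _ _
  · rw [translates, translates, hh.apply_left, ← Module.End.mul_apply, ← map_mul]
    refine hP _ (fun hmem ↦ hxy ?_) a b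
    rw [← QuotientGroup.eq, QuotientGroup.out_eq', QuotientGroup.out_eq'] at hmem
    exact hmem

theorem det_apply_translates [Fintype ι] [DecidableEq ι] [Fintype (G ⧸ P)] [DecidableEq (G ⧸ P)]
    (hh : IsInvariantForm ρ h) (hP : ∀ g ∉ P, ∀ a b, h (f a) (ρ g (f b)) = 0) :
    det (of fun i j ↦ h (translates ρ P f i) (translates ρ P f j)) =
      det (of fun a b ↦ h (f a) (f b)) ^ P.index := by
  have hkron : (of fun i j ↦ h (translates ρ P f i) (translates ρ P f j)) =
      kroneckerMap (· * ·) (1 : Matrix (G ⧸ P) (G ⧸ P) ℂ) (of fun a b ↦ h (f a) (f b)) := by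
    ext i j
    simp [apply_translates hh hP, one_apply]
  rw [hkron, det_kronecker, det_one, one_pow, one_mul, Subgroup.index, Nat.card_eq_fintype_card]

theorem span_range_translates [ρ.IsIrreducible] {w : V} (hw : w ≠ 0)
    (hP : ∀ p ∈ P, ρ p w ∈ Submodule.span ℂ (Set.range f)) :
    Submodule.span ℂ (Set.range (translates ρ P f)) = ⊤ := by
  rw [eq_top_iff, ← span_range_apply_eq_top (ρ := ρ) hw, Submodule.span_le]
  rintro _ ⟨g, rfl⟩
  obtain ⟨p, hp⟩ := QuotientGroup.mk_out_eq_mul P g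
  have hspan : Submodule.span ℂ (Set.range f) ≤
      (Submodule.span ℂ (Set.range (translates ρ P f))).comap (ρ (g : G ⧸ P).out) := by
    rw [Submodule.span_le]
    rintro _ ⟨a, rfl⟩
    exact Submodule.subset_span ⟨(g, a), rfl⟩
  have hg : ρ (g : G ⧸ P).out (ρ (p : G)⁻¹ w) = ρ g w := by
    rw [← Module.End.mul_apply, ← map_mul, hp, mul_inv_cancel_right]
  change ρ g w ∈ _
  rw [← hg]
  exact hspan (hP _ (inv_mem p.2))

theorem IsRankOne.apply_apply {F : Type*} [Field F] [Fintype F] [DecidableEq F] {x : AddChar F G}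
    {s : G} {c : Fˣ → G} {w : V} (hx : IsRankOne x s c) (hh : IsInvariantForm ρ h)
    (hxw : ∀ t, ρ (x t) w = w) (hcw : ∀ t, ρ (c t) w = w) (hT : heckeOp ρ x s w = -w) (a b : F) :
    h (ρ (x a * s) w) (ρ (x b * s) w) =
      h w w / Fintype.card F * if a = b then (Fintype.card F : ℂ) else -1 := by
  have hq : (Fintype.card F : ℂ) ≠ 0 := Nat.cast_ne_zero.2 Fintype.card_ne_zero
  split_ifs with hab
  · rw [hab, hh.apply_apply, div_mul_cancel₀ _ hq]
  have hterm (t : F) : h w (ρ (x t * s) w) = h w (ρ s w) := by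
    rw [map_mul, Module.End.mul_apply, hh.apply_right_of_eq_self (hxw t)]
  have hsum : (Fintype.card F : ℂ) * h w (ρ s w) = -h w w := by
    rw [← map_neg, ← hT, heckeOp_apply, map_sum, Finset.sum_congr rfl fun t _ ↦ hterm t]
    simp
  have hmul : (x a * s)⁻¹ * (x b * s) = s * x (b - a) * s := by
    rw [_root_.mul_inv_rev, inv_eq_of_mul_eq_one_left hx.mul_self, ← AddChar.map_neg_eq_inv,
      sub_eq_neg_add, AddChar.map_add_eq_mul]
    simp only [mul_assoc]
  obtain ⟨t, ht⟩ := IsUnit.mk0 (b - a) (sub_ne_zero.2 (Ne.symm hab))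
  rw [hh.apply_left, ← Module.End.mul_apply, ← map_mul, hmul, ← ht,
    hx.apply_mul_mul hxw (a := 1) (by rw [hcw, one_smul]), one_smul, hterm]
  field_simp
  linear_combination hsum

end Gram

section Steinberg

open Matrix.SpecialLinearGroup

variable {F V : Type*} [Field F] [AddCommGroup V] [Module ℂ V]
  {ρ : Representation ℂ (SL₃ F) V} {ν : Fˣ →* ℂˣ} {v w : V} {h : V →ₗ⋆[ℂ] V →ₗ[ℂ] ℂ}

variable [CharP F 2]

theorem IsHighestWeightVector.exists_apply_eq_smul (hw : IsHighestWeightVector ρ ν w) (g : SL₃ F) :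
    ∃ (d : ℂ) (a b c : F) (π : Equiv.Perm (Fin 3)), ρ g w = d • ρ (unip a b c * permSL π) w ∧
      (toGL g ∈ parabolic ↔ π 0 = 0) := by
  obtain ⟨a, b, c, π, x, y, a', b', c', rfl⟩ := exists_bruhat_specialLinear g
  refine ⟨ν (x * y), a, b, c, π, ?_, ?_⟩
  · rw [map_mul ρ _ (torusSL x y * _), map_mul ρ (torusSL x y)]
    simp only [Module.End.mul_apply, hw.apply_unip, hw.apply_torusSL, map_smul]
  · rw [map_mul, map_mul, map_mul, mul_mem_cancel_right, mul_mem_cancel_left,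
      toGL_permSL_mem_parabolic]
    · exact toGL_unip_mem_parabolic a b c
    · rw [toGL_torusSL]
      exact mul_mem (torus_mem_parabolic _) (toGL_unip_mem_parabolic a' b' c')

theorem IsHighestWeightVector.apply_torusSL_apply_permSL (hw : IsHighestWeightVector ρ ν w)
    (x y : Fˣ) (π : Equiv.Perm (Fin 3)) : ρ (torusSL x y) (ρ (permSL π) w) =
      (ν (![(x * y)⁻¹, x, y] (π 0))⁻¹ : ℂ) • ρ (permSL π) w := by
  let t : Fin 3 → Fˣ := ![(x * y)⁻¹, x, y]
  have hprod : t (π 0) * (t (π 1) * t (π 2)) = 1 := by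
    have := Equiv.prod_comp π t
    rw [Fin.prod_univ_three, Fin.prod_univ_three, mul_assoc] at this
    rw [this]
    simp [t, mul_assoc]
  have hcomp : t ∘ π = ![(t (π 1) * t (π 2))⁻¹, t (π 1), t (π 2)] := by
    rw [← eq_inv_of_mul_eq_one_left hprod]
    ext i
    fin_cases i <;> rfl
  have hmul : torusSL x y * permSL π = permSL π * torusSL (t (π 1)) (t (π 2)) :=
    toGL_injective <| by
      rw [map_mul, map_mul, toGL_torusSL, toGL_torusSL, torus_mul_permSL, hcomp]
  rw [← Module.End.mul_apply, ← map_mul, hmul, map_mul, Module.End.mul_apply, hw.apply_torusSL,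
    map_smul, eq_inv_of_mul_eq_one_right hprod]

theorem IsHighestWeightVector.exists_apply_eq_smul_of_mem_parabolic
    (hw : IsHighestWeightVector ρ ν w) {g : SL₃ F} (hg : toGL g ∈ parabolic) :
    ∃ d : ℂ, ρ g w = d • w ∨ ∃ t, ρ g w = d • ρ (root₂ t * s₂) w := by
  obtain ⟨d, a, b, c, π, hgw, hπ⟩ := hw.exists_apply_eq_smul g
  have hcases : ∀ π : Equiv.Perm (Fin 3), π 0 = 0 → π = 1 ∨ π = Equiv.swap 1 2 := by decide
  refine ⟨d, (hcases π (hπ.1 hg)).imp ?_ ?_⟩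
  · rintro rfl
    rw [hgw, map_one, mul_one, hw.apply_unip]
  · rintro rfl
    refine ⟨c, ?_⟩
    have hs := mul_root₂_mul_s₂ a b c (0 : F)
    rw [AddChar.map_zero_eq_one, one_mul, add_zero] at hs
    rw [hgw, hs, map_mul, Module.End.mul_apply, hw.apply_unip]

theorem IsHighestWeightVector.apply_eq_zero_of_notMem_parabolic [Finite F]
    (hw : IsHighestWeightVector ρ ν w) (hν : ν ≠ 1) (hh : IsInvariantForm ρ h)
    (hv : ∀ g, ρ g w = w → ρ g v = v) {g : SL₃ F} (hg : toGL g ∉ parabolic) :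
    h v (ρ g w) = 0 := by
  obtain ⟨d, a, b, c, π, hgw, hπ⟩ := hw.exists_apply_eq_smul g
  obtain ⟨x, hx⟩ : ∃ x, ν x ≠ 1 := by simpa [DFunLike.ext_iff] using hν
  have hvx : ρ (torusSL x x⁻¹) v = (1 : ℂ) • v := by
    rw [one_smul, hv _ (by simp [hw.apply_torusSL])]
  have hx' : (1 : ℂ) ≠ ν x := fun h1 ↦ hx (Units.ext h1.symm)
  have hne : (1 : ℂ) ≠ ν (![(x * x⁻¹)⁻¹, x, x⁻¹] (π 0))⁻¹ := by
    rw [hπ] at hg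
    have h12 : π 0 = 1 ∨ π 0 = 2 := by omega
    obtain h1 | h2 := h12
    · simpa [h1] using hx
    · simpa [h2] using hx'
  rw [hgw, map_smul, map_mul, Module.End.mul_apply,
    hh.apply_right_of_eq_self (hv _ (hw.apply_unip a b c)),
    hh.apply_eq_zero_of_ne hvx (hw.apply_torusSL_apply_permSL x x⁻¹ π) hne, smul_zero]

variable [Fintype F]

/-- A highest weight vector of nontrivial weight whose translates under the Levi subgroup `GL₂` of
`parabolic` span a Steinberg representation of that subgroup. -/
structure IsSteinbergVector (ρ : Representation ℂ (SL₃ F) V) (ν : Fˣ →* ℂˣ) (w : V) : Prop extends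
    IsHighestWeightVector ρ ν w where
  ne_one : ν ≠ 1
  heckeOp_apply_self : heckeOp ρ root₂ s₂ w = -w

theorem IsSteinbergVector.four_dvd_card (hw : IsSteinbergVector ρ ν w) : 4 ∣ Fintype.card F := by
  obtain ⟨x, hx⟩ := DFunLike.ne_iff.1 hw.ne_one
  have : Nontrivial Fˣ := ⟨x, 1, fun h ↦ hx (by rw [h, map_one, map_one])⟩
  have hunits : 1 < Fintype.card F - 1 := by
    rw [← Nat.card_eq_fintype_card, ← Nat.card_units]
    exact Finite.one_lt_card
  obtain ⟨k, -, hk⟩ := FiniteField.card F 2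
  have hlt : 2 ^ 1 < 2 ^ (k : ℕ) := by omega
  exact hk ▸ pow_dvd_pow 2 ((Nat.pow_lt_pow_iff_right one_lt_two).1 hlt)

theorem IsSteinbergVector.smul (hw : IsSteinbergVector ρ ν w) {d : ℂ} (hd : d ≠ 0) :
    IsSteinbergVector ρ ν (d • w) where
  ne_zero := smul_ne_zero hd hw.ne_zero
  apply_unip a b c := by rw [map_smul, hw.apply_unip]
  apply_torusSL x y := by rw [map_smul, hw.apply_torusSL, smul_comm]
  ne_one := hw.ne_one
  heckeOp_apply_self := by rw [map_smul, hw.heckeOp_apply_self, smul_neg]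

theorem IsSteinbergVector.exists_eq_smul_of_forall_apply_eq_self [FiniteDimensional ℂ V]
    [ρ.IsIrreducible] (hw : IsSteinbergVector ρ ν w) (hv : ∀ g, ρ g w = w → ρ g v = v) :
    ∃ d : ℂ, v = d • w := by
  obtain ⟨h, hh⟩ := exists_isInvariantInner ρ
  have hww : h w w ≠ 0 := mt (hh.eq_zero_of_apply_self w) hw.ne_zero
  have hq : (Fintype.card F : ℂ) ≠ 0 := Nat.cast_ne_zero.2 Fintype.card_ne_zero
  let u := v - (h w v / h w w) • w
  have hu (g) (hg : ρ g w = w) : ρ g u = u := by rw [map_sub, map_smul, hg, hv g hg]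
  have huw : h u w = 0 := by
    rw [← hh.conj_apply, map_eq_zero, map_sub, map_smul, smul_eq_mul, div_mul_cancel₀ _ hww,
      sub_self]
  have hus (t : F) : h u (ρ (root₂ t * s₂) w) = 0 := by
    have hterm (t : F) : h u (ρ (root₂ t * s₂) w) = h u (ρ s₂ w) := by
      rw [map_mul, Module.End.mul_apply,
        hh.apply_right_of_eq_self (hu (root₂ t) (hw.apply_unip 0 0 t))]
    have hsum : (Fintype.card F : ℂ) * h u (ρ s₂ w) = h u (heckeOp ρ root₂ s₂ w) := by
      rw [heckeOp_apply, map_sum, Finset.sum_congr rfl fun t _ ↦ hterm t]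
      simp
    rw [hw.heckeOp_apply_self, map_neg, huw, neg_zero] at hsum
    rw [hterm, (mul_eq_zero.1 hsum).resolve_left hq]
  have hug (g : SL₃ F) : h u (ρ g w) = 0 := by
    by_cases hg : toGL g ∈ parabolic
    · obtain ⟨d, hgw | ⟨t, hgw⟩⟩ := hw.exists_apply_eq_smul_of_mem_parabolic hg
      · rw [hgw, map_smul, huw, smul_zero]
      · rw [hgw, map_smul, hus, smul_zero]
    · exact hw.apply_eq_zero_of_notMem_parabolic hw.ne_one hh.toIsInvariantForm hu hg
  have hu0 : h u = 0 := LinearMap.ext_on (span_range_apply_eq_top (ρ := ρ) hw.ne_zero) <| by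
    rintro _ ⟨g, rfl⟩
    exact hug g
  exact ⟨_, sub_eq_zero.1 (hh.eq_zero_of_apply_self u (by rw [hu0, LinearMap.zero_apply]))⟩

/-- The basis of an irreducible representation obtained from a Steinberg vector `w`. -/
def steinbergBasis (ρ : Representation ℂ (SL₃ F) V) (w : V) :
    (SL₃ F ⧸ parabolic.comap (toGL (n := Fin 3) (R := F))) × F → V :=
  translates ρ _ fun t ↦ ρ (root₂ t * s₂) w

theorem IsSteinbergVector.span_range_steinbergBasis [ρ.IsIrreducible]
    (hw : IsSteinbergVector ρ ν w) : Submodule.span ℂ (Set.range (steinbergBasis ρ w)) = ⊤ := by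
  refine span_range_translates hw.ne_zero fun p hp ↦ ?_
  have hmem : w ∈ Submodule.span ℂ (Set.range fun t ↦ ρ (root₂ t * s₂) w) := by
    rw [← neg_mem_iff, ← hw.heckeOp_apply_self, heckeOp_apply]
    exact sum_mem fun t _ ↦ Submodule.subset_span ⟨t, rfl⟩
  obtain ⟨d, hpw | ⟨t, hpw⟩⟩ := hw.exists_apply_eq_smul_of_mem_parabolic hp
  · exact hpw ▸ Submodule.smul_mem _ d hmem
  · exact hpw ▸ Submodule.smul_mem _ d (Submodule.subset_span ⟨t, rfl⟩)

theorem IsSteinbergVector.det_apply_steinbergBasis [DecidableEq F]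
    [Fintype (SL₃ F ⧸ parabolic.comap (toGL (n := Fin 3) (R := F)))]
    [DecidableEq (SL₃ F ⧸ parabolic.comap (toGL (n := Fin 3) (R := F)))]
    (hw : IsSteinbergVector ρ ν w) (hh : IsInvariantForm ρ h) :
    det (of fun i j ↦ h (steinbergBasis ρ w i) (steinbergBasis ρ w j)) =
      ((h w w / Fintype.card F) ^ Fintype.card F *
        ((Fintype.card F : ℂ) + 1) ^ (Fintype.card F - 1)) ^
          (Fintype.card F ^ 2 + Fintype.card F + 1) := by
  have hblock : (of fun a b ↦ h (ρ (root₂ a * s₂) w) (ρ (root₂ b * s₂) w)) =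
      (h w w / Fintype.card F) • of fun a b : F ↦
        if a = b then (Fintype.card F : ℂ) else -1 := by
    ext a b
    exact isRankOne_root₂.apply_apply hh (hw.apply_unip 0 0) (fun t ↦ by simp [hw.apply_torusSL])
      hw.heckeOp_apply_self a b
  have hP (g : SL₃ F) (hg : g ∉ parabolic.comap toGL) (a b : F) :
      h (ρ (root₂ a * s₂) w) (ρ g (ρ (root₂ b * s₂) w)) = 0 := by
    have hmem (t : F) : toGL (root₂ t * s₂) ∈ parabolic := by
      rw [map_mul]
      exact mul_mem (toGL_unip_mem_parabolic 0 0 t) (toGL_permSL_mem_parabolic.2 (by decide))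
    rw [hh.apply_left, ← Module.End.mul_apply, ← Module.End.mul_apply, ← map_mul, ← map_mul]
    refine hw.apply_eq_zero_of_notMem_parabolic hw.ne_one hh (fun g hg ↦ hg) ?_
    rwa [map_mul, map_mul, map_inv, mul_mem_cancel_right (hmem b),
      mul_mem_cancel_left (inv_mem (hmem a))]
  rw [steinbergBasis, det_apply_translates hh hP, hblock, det_smul, det_ite_card_neg_one,
    index_comap_parabolic, Nat.card_eq_fintype_card]

variable [FiniteDimensional ℂ V]

theorem IsSteinbergVector.linearIndependent_steinbergBasis (hw : IsSteinbergVector ρ ν w) :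
    LinearIndependent ℂ (steinbergBasis ρ w) := by
  classical
  have := Fintype.ofFinite (SL₃ F ⧸ parabolic.comap (toGL (n := Fin 3) (R := F)))
  obtain ⟨h, hh⟩ := exists_isInvariantInner ρ
  refine linearIndependent_of_det_ne_zero (h := h) ?_
  rw [hw.det_apply_steinbergBasis hh.toIsInvariantForm]
  have hww : h w w ≠ 0 := mt (hh.eq_zero_of_apply_self w) hw.ne_zero
  have hq : (Fintype.card F : ℂ) + 1 ≠ 0 := Nat.cast_add_one_ne_zero _
  simp [hww, hq]

theorem IsSteinbergVector.finrank_eq [ρ.IsIrreducible] (hw : IsSteinbergVector ρ ν w) :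
    Module.finrank ℂ V =
      Fintype.card F * (Fintype.card F ^ 2 + Fintype.card F + 1) := by
  rw [Module.finrank_eq_nat_card_basis (Module.Basis.mk hw.linearIndependent_steinbergBasis
    hw.span_range_steinbergBasis.ge), Nat.card_prod, ← Subgroup.index, index_comap_parabolic,
    Nat.card_eq_fintype_card, mul_comm]

theorem exists_isSteinbergVector [ρ.IsIrreducible] (heven : Even (Module.finrank ℂ V))
    {g : SL₃ F} (hg : starRingEnd ℂ (ρ.character g) ≠ ρ.character g) :
    ∃ ν w, IsSteinbergVector ρ ν w := by
  obtain ⟨ν, w, hw, hν⟩ := exists_isHighestWeightVector_of_even (ρ := ρ) heven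
  have hne : ν ≠ 1 := by
    rintro rfl
    exact hg (hw.conj_character_eq_self g)
  exact ⟨ν, w, hw, hne, hν.resolve_left hne⟩

end Steinberg

end Paper

namespace Paper

section Matrices

variable {G : Type} [Group G] {n : ℕ} {ρ : G →* GL (Fin n) ℂ}

/-- The linear representation on column vectors of a matrix representation. -/
def toRepresentation (ρ : G →* GL (Fin n) ℂ) : Representation ℂ G (Fin n → ℂ) :=
  (toLinAlgEquiv' : _ ≃ₐ[ℂ] Module.End ℂ (Fin n → ℂ)).toMonoidHom.comp
    ((Units.coeHom (Matrix (Fin n) (Fin n) ℂ)).comp ρ)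

@[simp]
theorem toRepresentation_apply (g : G) (v : Fin n → ℂ) :
    toRepresentation ρ g v = (ρ g : Matrix (Fin n) (Fin n) ℂ) *ᵥ v :=
  rfl

theorem character_toRepresentation : (toRepresentation ρ).character = charOf ρ :=
  funext fun _ ↦ trace_toLin'_eq _

theorem IsIrredRep.isIrreducible (hρ : IsIrredRep ρ) : (toRepresentation ρ).IsIrreducible := by
  have : NeZero n := ⟨hρ.1.ne'⟩
  exact isIrreducible_of_forall_apply_mem hρ.2

theorem charOf_one : charOf ρ 1 = n := by
  simp [charOf]

theorem NotReal.exists_conj_ne {χ : G → ℂ} (hχ : NotReal χ) : ∃ g, starRingEnd ℂ (χ g) ≠ χ g := by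
  by_contra! hreal
  refine hχ (Subfield.closure_le.2 ?_)
  rintro _ ⟨g, rfl⟩
  obtain ⟨r, hr⟩ := Complex.conj_eq_iff_real.1 (hreal g)
  exact hr ▸ Subfield.subset_closure ⟨r, rfl⟩

theorem charOf_inv {H : Matrix (Fin n) (Fin n) ℂ} (hdet : IsUnit H.det)
    (hinv : ∀ g, (ρ g).valᴴ * H * (ρ g).val = H) (g : G) :
    charOf ρ g⁻¹ = starRingEnd ℂ (charOf ρ g) := by
  have hmul : (ρ g).valᴴ * H = H * (ρ g⁻¹).val := by
    rw [map_inv]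
    exact (Units.eq_mul_inv_iff_mul_eq _).2 (hinv g)
  have hconj : (ρ g).valᴴ = H * (ρ g⁻¹).val * H⁻¹ := by
    rw [← hmul, mul_nonsing_inv_cancel_right _ _ hdet]
  calc charOf ρ g⁻¹ = trace (H * (ρ g⁻¹).val * H⁻¹) := by
        rw [trace_mul_comm, nonsing_inv_mul_cancel_left _ _ hdet, charOf]
    _ = starRingEnd ℂ (charOf ρ g) := by rw [← hconj, trace_conjTranspose]; rfl

theorem conj_mem_charField {χ : G → ℂ} (hχ : ∀ g, χ g⁻¹ = starRingEnd ℂ (χ g)) {z : ℂ}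
    (hz : z ∈ charField χ) : starRingEnd ℂ z ∈ charField χ := by
  suffices charField χ ≤ (charField χ).comap (starRingEnd ℂ) from this hz
  refine Subfield.closure_le.2 ?_
  rintro _ ⟨g, rfl⟩
  exact Subfield.subset_closure ⟨g⁻¹, hχ g⟩

theorem det_mem {L : Subfield ℂ} {A : Matrix (Fin n) (Fin n) ℂ} (hA : ∀ i j, A i j ∈ L) :
    A.det ∈ L := by
  rw [det_apply']
  exact sum_mem fun σ _ ↦ mul_mem (intCast_mem _ _) (prod_mem fun i _ ↦ hA _ _)

theorem mulVec_mem {L : Subfield ℂ} {A : Matrix (Fin n) (Fin n) ℂ} (hA : ∀ i j, A i j ∈ L)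
    {v : Fin n → ℂ} (hv : ∀ i, v i ∈ L) (i : Fin n) : (A *ᵥ v) i ∈ L := by
  rw [mulVec, dotProduct]
  exact sum_mem fun j _ ↦ mul_mem (hA i j) (hv j)

theorem exists_forall_mem_of_forall_apply_eq_self [Finite G] {L : Subfield ℂ}
    (hL : ∀ g i j, (ρ g : Matrix (Fin n) (Fin n) ℂ) i j ∈ L) {w : Fin n → ℂ} (hw : w ≠ 0) :
    ∃ v ≠ 0, (∀ i, v i ∈ L) ∧
      ∀ g, toRepresentation ρ g w = w → toRepresentation ρ g v = v := by
  classical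
  have := Fintype.ofFinite G
  let E : Matrix (Fin n) (Fin n) ℂ := ∑ k with toRepresentation ρ k w = w, (ρ k).val
  have hE (g) (hg : toRepresentation ρ g w = w) : (ρ g).val * E = E := by
    rw [Finset.mul_sum]
    refine Finset.sum_equiv (Equiv.mulLeft g) (fun k ↦ ?_) fun k _ ↦ ?_
    · simp only [Finset.mem_filter_univ, Equiv.coe_mulLeft, map_mul, Module.End.mul_apply]
      exact ⟨fun hk ↦ by rw [hk, hg],
        fun hk ↦ ((toRepresentation ρ).apply_bijective g).1 (hk.trans hg.symm)⟩
    · rw [Equiv.coe_mulLeft, map_mul, Units.val_mul]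
  have hE0 : E ≠ 0 := by
    intro h0
    have hEw : E *ᵥ w = (Finset.card {k | toRepresentation ρ k w = w} : ℂ) • w := by
      rw [sum_mulVec, Nat.cast_smul_eq_nsmul]
      exact Finset.sum_eq_card_nsmul fun k hk ↦ (Finset.mem_filter.1 hk).2
    rw [h0, zero_mulVec, eq_comm, smul_eq_zero, Nat.cast_eq_zero, Finset.card_eq_zero] at hEw
    have h1 : (1 : G) ∈ ({k | toRepresentation ρ k w = w} : Finset G) :=
      (Finset.mem_filter_univ _).2 (by rw [map_one, Module.End.one_apply])
    exact Finset.notMem_empty _ (hEw.resolve_right hw ▸ h1)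
  obtain ⟨j, hj⟩ : ∃ j, E.col j ≠ 0 := by
    by_contra! h0
    exact hE0 (Matrix.ext fun i j ↦ congrFun (h0 j) i)
  refine ⟨E.col j, hj, fun i ↦ ?_, fun g hg ↦ funext fun i ↦ congrFun (congrFun (hE g hg) i) j⟩
  simp only [E, col_apply, Matrix.sum_apply]
  exact sum_mem fun k _ ↦ hL k i j

/-- The sesquilinear form `(v, w) ↦ star v ⬝ᵥ H *ᵥ w` of a square matrix `H`. -/
def sesqForm (H : Matrix (Fin n) (Fin n) ℂ) : (Fin n → ℂ) →ₗ⋆[ℂ] (Fin n → ℂ) →ₗ[ℂ] ℂ :=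
  toLinearMapₛₗ₂' ℂ (starRingEnd ℂ) (RingHom.id ℂ) H

theorem sesqForm_apply (H : Matrix (Fin n) (Fin n) ℂ) (v w : Fin n → ℂ) :
    sesqForm H v w = star v ⬝ᵥ H *ᵥ w := by
  simp [sesqForm, toLinearMapₛₗ₂'_apply, dotProduct, mulVec, Finset.mul_sum, mul_comm]

theorem isInvariantForm_sesqForm {H : Matrix (Fin n) (Fin n) ℂ} (hH : Hᴴ = H)
    (hinv : ∀ g, (ρ g).valᴴ * H * (ρ g).val = H) :
    IsInvariantForm (toRepresentation ρ) (sesqForm H) where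
  isSymm := ⟨fun v w ↦ by
    rw [sesqForm_apply, sesqForm_apply, starRingEnd_apply, ← star_dotProduct, star_mulVec, hH,
      ← dotProduct_mulVec]⟩
  apply_apply g v w := by
    rw [sesqForm_apply, sesqForm_apply, toRepresentation_apply, toRepresentation_apply,
      star_mulVec, mulVec_mulVec, dotProduct_mulVec, vecMul_vecMul, ← mul_assoc, hinv,
      ← dotProduct_mulVec]

theorem det_sesqForm (H : Matrix (Fin n) (Fin n) ℂ) (b : Fin n → Fin n → ℂ) :
    det (of fun i j ↦ sesqForm H (b i) (b j)) =
      starRingEnd ℂ (det (of b)) * H.det * det (of b) := by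
  have hmul : (of fun i j ↦ sesqForm H (b i) (b j)) =
      (starRingEnd ℂ).mapMatrix (of b) * H * (of b)ᵀ := by
    ext i j
    rw [of_apply, sesqForm_apply, mul_assoc]
    rfl
  rw [hmul, det_mul, det_mul, det_transpose, RingHom.map_det]

end Matrices

section Discriminant

open Matrix.SpecialLinearGroup

variable {F : Type} [Field F] [Fintype F] [CharP F 2] {n : ℕ} {ρ : SL₃ F →* GL (Fin n) ℂ}
  {ν : Fˣ →* ℂˣ} {w : Fin n → ℂ} {L : Subfield ℂ}

theorem IsSteinbergVector.exists_forall_mem [(toRepresentation ρ).IsIrreducible]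
    (hw : IsSteinbergVector (toRepresentation ρ) ν w)
    (hL : ∀ g i j, (ρ g : Matrix (Fin n) (Fin n) ℂ) i j ∈ L) :
    ∃ v, (∀ i, v i ∈ L) ∧ IsSteinbergVector (toRepresentation ρ) ν v := by
  obtain ⟨v, hv0, hvL, hv⟩ := exists_forall_mem_of_forall_apply_eq_self hL hw.ne_zero
  obtain ⟨d, rfl⟩ := hw.exists_eq_smul_of_forall_apply_eq_self hv
  exact ⟨d • w, hvL, hw.smul (left_ne_zero_of_smul hv0)⟩

theorem IsSteinbergVector.exists_det_eq [(toRepresentation ρ).IsIrreducible]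
    (hw : IsSteinbergVector (toRepresentation ρ) ν w) (hwL : ∀ i, w i ∈ L)
    (hL : ∀ g i j, (ρ g : Matrix (Fin n) (Fin n) ℂ) i j ∈ L) {H : Matrix (Fin n) (Fin n) ℂ}
    (hh : IsInvariantForm (toRepresentation ρ) (sesqForm H)) :
    ∃ d ∈ L, d ≠ 0 ∧ starRingEnd ℂ d * H.det * d =
      ((sesqForm H w w / Fintype.card F) ^ Fintype.card F *
        ((Fintype.card F : ℂ) + 1) ^ (Fintype.card F - 1)) ^
          (Fintype.card F ^ 2 + Fintype.card F + 1) := by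
  classical
  have := Fintype.ofFinite (SL₃ F ⧸ parabolic.comap (toGL (n := Fin 3) (R := F)))
  have hcard : Fintype.card ((SL₃ F ⧸ parabolic.comap (toGL (n := Fin 3) (R := F))) × F) = n := by
    rw [← Module.finrank_eq_card_basis (Module.Basis.mk hw.linearIndependent_steinbergBasis
      hw.span_range_steinbergBasis.ge), Module.finrank_fin_fun]
  let e := (Fintype.equivFinOfCardEq hcard).symm
  refine ⟨det (of fun i ↦ steinbergBasis (toRepresentation ρ) w (e i)), ?_, ?_, ?_⟩
  · exact det_mem fun i j ↦ mulVec_mem (hL _) (mulVec_mem (hL _) hwL) j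
  · have hli := hw.linearIndependent_steinbergBasis.comp e e.injective
    exact ((isUnit_iff_isUnit_det _).1 (linearIndependent_rows_iff_isUnit.1 hli)).ne_zero
  · rw [← det_sesqForm, ← hw.det_apply_steinbergBasis hh, ← det_submatrix_equiv_self e]
    rfl

theorem exists_mem_pow_mul_pow_eq_mul_sq {κ : ℂ} (hκL : κ ∈ L) (hκ : starRingEnd ℂ κ = κ) {q : ℕ}
    (hq : Even q) (hq0 : q ≠ 0) :
    ∃ y ∈ L, starRingEnd ℂ y = y ∧
      (κ ^ q * ((q : ℂ) + 1) ^ (q - 1)) ^ (q ^ 2 + q + 1) = (q + 1) * y ^ 2 := by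
  obtain ⟨m, hm, hm'⟩ : ∃ m, q = 2 * m + 2 ∧ q - 1 = 2 * m + 1 := by
    obtain ⟨k, rfl⟩ := hq.two_dvd
    exact ⟨k - 1, by omega, by omega⟩
  obtain ⟨s, hs⟩ : Odd (q ^ 2 + q + 1) := by
    rw [sq, ← Nat.mul_succ]
    exact (Nat.even_mul_succ_self q).add_one
  let x := κ ^ (m + 1) * ((q : ℂ) + 1) ^ m
  let y := (((q : ℂ) + 1) * x ^ 2) ^ s * x
  have hxy : (κ ^ (2 * m + 2) * ((q : ℂ) + 1) ^ (2 * m + 1)) ^ (2 * s + 1) = (q + 1) * y ^ 2 := by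
    simp only [x, y]
    ring
  have hqL : (q : ℂ) + 1 ∈ L := add_mem (natCast_mem _ _) (one_mem _)
  have hxL : x ∈ L := mul_mem (pow_mem hκL _) (pow_mem hqL _)
  refine ⟨y, mul_mem (pow_mem (mul_mem hqL (pow_mem hxL _)) _) hxL, by simp [x, y, hκ], ?_⟩
  rwa [← hm, ← hm', ← hs] at hxy

theorem IsSteinbergVector.exists_det_eq_mul [(toRepresentation ρ).IsIrreducible]
    (hw : IsSteinbergVector (toRepresentation ρ) ν w)
    (hL : ∀ g i j, (ρ g : Matrix (Fin n) (Fin n) ℂ) i j ∈ L)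
    (hconj : ∀ z ∈ L, starRingEnd ℂ z ∈ L) {H : Matrix (Fin n) (Fin n) ℂ}
    (hHL : ∀ i j, H i j ∈ L) (hdet : IsUnit H.det)
    (hh : IsInvariantForm (toRepresentation ρ) (sesqForm H)) :
    ∃ z ∈ L, z ≠ 0 ∧ H.det = ((Fintype.card F : ℂ) + 1) * (z * starRingEnd ℂ z) := by
  obtain ⟨v, hvL, hv⟩ := hw.exists_forall_mem hL
  obtain ⟨d, hdL, hd0, hd⟩ := hv.exists_det_eq hvL hL hh
  have hκL : sesqForm H v v / Fintype.card F ∈ L := by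
    refine div_mem ?_ (natCast_mem _ _)
    rw [sesqForm_apply]
    exact sum_mem fun i _ ↦ mul_mem (hconj _ (hvL i)) (mulVec_mem hHL hvL i)
  have hκ : starRingEnd ℂ (sesqForm H v v / Fintype.card F) = sesqForm H v v / Fintype.card F := by
    rw [map_div₀, hh.conj_apply, map_natCast]
  have heven : Even (Fintype.card F) :=
    Nat.even_iff.2 (FiniteField.even_card_of_char_two (ringChar.eq F 2))
  obtain ⟨y, hyL, hy, hsq⟩ := exists_mem_pow_mul_pow_eq_mul_sq hκL hκ heven Fintype.card_ne_zero
  rw [hsq] at hd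
  have hd0' : starRingEnd ℂ d ≠ 0 := (map_ne_zero _).2 hd0
  have hy0 : y ≠ 0 := by
    rintro rfl
    rw [zero_pow two_ne_zero, mul_zero] at hd
    exact mul_ne_zero (mul_ne_zero hd0' hdet.ne_zero) hd0 hd
  refine ⟨y / d, div_mem hyL hdL, div_ne_zero hy0 hd0, ?_⟩
  rw [map_div₀, hy]
  field_simp
  linear_combination hd

theorem exists_isSteinbergVector_toRepresentation [(toRepresentation ρ).IsIrreducible]
    (heven : Even n) (hρ : NotReal (charOf ρ)) :
    ∃ ν w, IsSteinbergVector (toRepresentation ρ) ν w := by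
  obtain ⟨g, hg⟩ := hρ.exists_conj_ne
  rw [← character_toRepresentation] at hg
  exact exists_isSteinbergVector (by rwa [Module.finrank_fin_fun]) hg

theorem even_mul_sub_one_div_two {n : ℕ} (hn : 4 ∣ n) : Even (n * (n - 1) / 2) := by
  obtain ⟨c, rfl⟩ := hn
  rw [show 4 * c * (4 * c - 1) = 2 * (2 * (c * (4 * c - 1))) by ring,
    Nat.mul_div_cancel_left _ two_pos]
  exact even_two_mul _

theorem hasUnitaryDisc_charOf [(toRepresentation ρ).IsIrreducible] (heven : Even n)
    (hρ : NotReal (charOf ρ)) : HasUnitaryDisc (charOf ρ) ((Fintype.card F : ℂ) + 1) := by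
  intro n' σ hσ hL H hHL hdet hH hinv
  have := isIrreducible_of_character_eq
    (character_toRepresentation.trans (hσ.trans character_toRepresentation.symm))
  obtain rfl : n = n' := by exact_mod_cast charOf_one.symm.trans ((congrFun hσ 1).trans charOf_one)
  rw [hσ] at hL hHL hρ ⊢
  obtain ⟨ν, w, hw⟩ := exists_isSteinbergVector_toRepresentation heven hρ
  have hn := hw.finrank_eq
  rw [Module.finrank_fin_fun] at hn
  have hsign := even_mul_sub_one_div_two (hn ▸ hw.four_dvd_card.mul_right _)
  obtain ⟨z, hzL, hz0, hz⟩ := hw.exists_det_eq_mul hL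
    (fun z ↦ conj_mem_charField (charOf_inv hdet hinv)) hHL hdet (isInvariantForm_sesqForm hH hinv)
  exact ⟨z, hzL, hz0, by rw [hsign.neg_one_pow, one_mul, hz]⟩

end Discriminant

/-- for `q` a power of 2, every even-degree irreducible complex
character of `SL₃(F_q)` with non-real character field has degree `q(q²+q+1)`
and unitary discriminant `(-1)^q·(q+1)`. -/
theorem stmt4 (k : ℕ) (hk : 0 < k)
    (F : Type) [Field F] [Fintype F] (hF : Fintype.card F = 2 ^ k)
    (q : ℕ) (hq : q = 2 ^ k)
    (χ : Matrix.SpecialLinearGroup (Fin 3) F → ℂ) (hχ : IsIrrChar χ)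
    (heven : ∃ m : ℕ, χ 1 = 2 * (m : ℂ))
    (hnr : NotReal χ) :
    χ 1 = (q : ℂ) * ((q : ℂ) ^ 2 + q + 1) ∧
    HasUnitaryDisc χ ((-1 : ℂ) ^ q * ((q : ℂ) + 1)) := by
  have : CharP F 2 := charP_of_card_eq_prime_pow hF
  obtain rfl : Fintype.card F = q := hF.trans hq.symm
  obtain ⟨n, ρ, hρ, rfl⟩ := hχ
  have := hρ.isIrreducible
  have hn : Even n := by
    obtain ⟨m, hm⟩ := heven
    rw [charOf_one] at hm
    exact even_iff_two_dvd.2 ⟨m, by exact_mod_cast hm⟩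
  obtain ⟨ν, w, hw⟩ := exists_isSteinbergVector_toRepresentation hn hnr
  have hdeg := hw.finrank_eq
  rw [Module.finrank_fin_fun] at hdeg
  have hq2 : Even (Fintype.card F) := hF ▸ Nat.even_pow.2 ⟨even_two, hk.ne'⟩
  rw [charOf_one, hq2.neg_one_pow, one_mul]
  exact ⟨by exact_mod_cast hdeg, hasUnitaryDisc_charOf hn hnr⟩

end Paper
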